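/- arXiv:2603.21538 — 3 statements merged into one kernel-verified Lean document; each statement's English description precedes it below -/
import Mathlib

section
/- Let G be a bull-free minimally non-perfectly weight divisible graph. Then G is connected and locally perfect, and for every vertex v of G, the subgraph induced on M(v) = V(G)∖(N(v)∪{v}) is imperfect and contains no odd antihole with at least 7 vertices. -/
/-!
Let `G` be bull-free and MNWD; by minimality some weight `w` on all of `V(G)` admits no division.

* `M(v)` is imperfect: otherwise `M(v) ∪ {v}` is perfect, and every clique of the remaining set
  `N(v)` becomes heavier by adding `v`, which divides `G` (`MNWD.imperfect_antinbhd`).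
* `G` is prime, i.e. has no homogeneous set `X`: divide `X`, contract it to a vertex of its perfect
  part weighted by the heaviest clique of `X`, divide the smaller graph, and expand again, using
  Lovász's substitution lemma `Perf.substitute` (`MNWD.primeOn`). In particular `G` is connected.
* In a prime bull-free graph, a prime set `H` that is not a split graph cannot have both a center
  (a vertex complete to `H`) and an anticenter (`BullFree.no_center_anticenter`). This applies to
  minimally imperfect sets, which are prime by substitution and not split.
* `N(v)` is perfect (`MNWD.perf_neighborSet`): otherwise choose minimally imperfect `H₁ ⊆ N(v)` and
  `H₂ ⊆ M(v)`. As `v` is a center of `H₁` and an anticenter of `H₂`, no vertex of `H₂` is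
  anticomplete to `H₁` and no vertex of `H₁` is complete to `H₂`. Bull-freeness then makes the
  non-neighbours in `H₁` of a vertex of `H₂` a clique, and the neighbours in `H₂` of a vertex of
  `H₁` a stable set. For non-adjacent `a, b ∈ H₁`, the sets `N(a)` and `N(b)` cover `H₂` by two
  stable sets, so `H₂` is bipartite, hence perfect.
* An odd antihole in `M(v)` is imperfect, so that no vertex is complete to it. Every five
  consecutive vertices of an antihole of length at least `7` form a house, and inspecting bulls on
  such houses shows that being anticomplete to the antihole passes from `v` to its neighbours and
  thus to the whole connected graph, which is absurd (`BullFree.no_antihole`).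
-/

open SimpleGraph

/-- `H` is isomorphic to an induced subgraph of `G`. -/
def ContainsInduced {α β : Type*} (G : SimpleGraph α) (H : SimpleGraph β) : Prop :=
  ∃ f : β ↪ α, ∀ a b, G.Adj (f a) (f b) ↔ H.Adj a b

/-- `G` is `H`-free: `G` does not contain `H` as an induced subgraph. -/
def IsFree {α β : Type*} (G : SimpleGraph α) (H : SimpleGraph β) : Prop :=
  ¬ ContainsInduced G H

/-- The clique number of the subgraph of `G` induced on `s`. -/
noncomputable def cliqueNumOn {V : Type*} (G : SimpleGraph V) (s : Set V) : ℕ :=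
  sSup {n | ∃ t : Finset V, ↑t ⊆ s ∧ G.IsNClique n t}

/-- The maximum `w`-weight of a clique of `G` contained in `s`. -/
noncomputable def wCliqueNumOn {V : Type*} (G : SimpleGraph V) (w : V → ℕ) (s : Set V) : ℕ :=
  sSup {n | ∃ t : Finset V, ↑t ⊆ s ∧ G.IsClique (↑t : Set V) ∧ ∑ v ∈ t, w v = n}

/-- A graph is perfect if every induced subgraph has chromatic number equal to clique number. -/
def IsPerfect {V : Type*} (G : SimpleGraph V) : Prop :=
  ∀ s : Set V, (G.induce s).chromaticNumber = (cliqueNumOn G s : ℕ∞)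

/-- `G` is perfectly divisible: every (nonempty) induced subgraph `H` of `G` admits a partition
`(A, B)` of its vertex set with `H[A]` perfect and `ω(H[B]) < ω(H)`. -/
def PerfectlyDivisible {V : Type*} (G : SimpleGraph V) : Prop :=
  ∀ s : Set V, s.Nonempty →
    ∃ A B : Set V, A ∪ B = s ∧ A ∩ B = ∅ ∧
      IsPerfect (G.induce A) ∧ cliqueNumOn G B < cliqueNumOn G s

/-- `G` is perfectly weight divisible: for every positive integer weight function `w` and every
(nonempty) induced subgraph `H` of `G`, there is a partition `(P, W)` of its vertex set with
`H[P]` perfect and the maximum weight of a clique of `H[W]` less than that of `H`. -/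
def PerfectlyWeightDivisible {V : Type*} (G : SimpleGraph V) : Prop :=
  ∀ w : V → ℕ, (∀ v, 0 < w v) →
    ∀ s : Set V, s.Nonempty →
      ∃ P W : Set V, P ∪ W = s ∧ P ∩ W = ∅ ∧
        IsPerfect (G.induce P) ∧ wCliqueNumOn G w W < wCliqueNumOn G w s

/-- The bull: a triangle `{0,1,2}` with pendant edges `0-3` and `1-4`. -/
def bull : SimpleGraph (Fin 5) :=
  SimpleGraph.fromEdgeSet {s(0,1), s(0,2), s(1,2), s(0,3), s(1,4)}

/-- The house: the complement of the path on 5 vertices. -/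
def house : SimpleGraph (Fin 5) := (SimpleGraph.pathGraph 5)ᶜ

/-- The hammer: a triangle `{0,1,2}` together with the path `2-3-4`. -/
def hammer : SimpleGraph (Fin 5) :=
  SimpleGraph.fromEdgeSet {s(0,1), s(0,2), s(1,2), s(2,3), s(3,4)}

/-- The diamond: `K₄` minus an edge. -/
def diamond : SimpleGraph (Fin 4) :=
  SimpleGraph.fromEdgeSet {s(0,1), s(0,2), s(0,3), s(1,2), s(1,3)}

/-- The odd torch built on the cycle `C_k` from a set `S` of cycle vertices: two new adjacent
vertices are added, the first adjacent exactly to `S`, the second to no cycle vertex. -/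
def oddTorch (k : ℕ) (S : Set (Fin k)) : SimpleGraph (Fin k ⊕ Fin 2) :=
  SimpleGraph.fromRel (fun a b =>
    match a, b with
    | Sum.inl i, Sum.inl j => (SimpleGraph.cycleGraph k).Adj i j
    | Sum.inl i, Sum.inr u => u = 0 ∧ i ∈ S
    | Sum.inr _, Sum.inl _ => False
    | Sum.inr u, Sum.inr v => u ≠ v)

/-- `G` contains no odd torch as an induced subgraph. -/
def OddTorchFree {V : Type*} (G : SimpleGraph V) : Prop :=
  ∀ (k : ℕ) (S : Set (Fin k)), 5 ≤ k → Odd k → S.Nonempty →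
    (∀ i ∈ S, ∀ j ∈ S, ¬ (SimpleGraph.cycleGraph k).Adj i j) →
    IsFree G (oddTorch k S)

/-- `G` is locally perfect: the neighbourhood of each vertex induces a perfect graph. -/
def LocallyPerfect {V : Type*} (G : SimpleGraph V) : Prop :=
  ∀ v : V, IsPerfect (G.induce (G.neighborSet v))

/-- `N(X)`: vertices outside `X` with a neighbour in `X`. -/
def nbhd {V : Type*} (G : SimpleGraph V) (X : Set V) : Set V :=
  {u | u ∉ X ∧ ∃ x ∈ X, G.Adj u x}

/-- `M(X) = V(G) \ (X ∪ N(X))`: vertices outside `X` with no neighbour in `X`. -/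
def antiNbhd {V : Type*} (G : SimpleGraph V) (X : Set V) : Set V :=
  {u | u ∉ X ∧ ∀ x ∈ X, ¬ G.Adj u x}

/-- Minimally non-perfectly divisible. -/
def MNPD {V : Type*} (G : SimpleGraph V) : Prop :=
  ¬ PerfectlyDivisible G ∧ ∀ s : Set V, s ≠ Set.univ → PerfectlyDivisible (G.induce s)

/-- Minimally non-perfectly weight divisible. -/
def MNWD {V : Type*} (G : SimpleGraph V) : Prop :=
  ¬ PerfectlyWeightDivisible G ∧ ∀ s : Set V, s ≠ Set.univ → PerfectlyWeightDivisible (G.induce s)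

/-! ### Bulls, modules and prime sets -/

/-- `G` has no induced bull: no triangle `a b c` with pendant edges `a d` and `b e`. The listed
adjacencies and non-adjacencies force the five vertices to be distinct. -/
def BullFree {V : Type*} (G : SimpleGraph V) : Prop :=
  ∀ a b c d e, G.Adj a b → G.Adj a c → G.Adj b c → G.Adj d a → G.Adj e b →
    ¬ G.Adj d b → ¬ G.Adj d c → ¬ G.Adj e a → ¬ G.Adj e c → ¬ G.Adj d e → False

lemma BullFree.of_isFree {V : Type*} {G : SimpleGraph V} (h : IsFree G bull) : BullFree G := by
  intro a b c d e hab hac hbc hda heb hdb hdc hea hec hde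
  apply h
  have h1 := hab.ne
  have h2 := hac.ne
  have h3 := hbc.ne
  have h4 := hda.ne
  have h5 := heb.ne
  have h6 : d ≠ b := by rintro rfl; exact hde heb.symm
  have h7 : d ≠ c := by rintro rfl; exact hdb hbc.symm
  have h8 : e ≠ a := by rintro rfl; exact hde hda
  have h9 : e ≠ c := by rintro rfl; exact hea hac.symm
  have h10 : d ≠ e := by rintro rfl; exact hea hda
  refine ⟨⟨![a, b, c, d, e], ?_⟩, ?_⟩
  · intro i j hij
    fin_cases i <;> fin_cases j <;> simp_all
  · intro i j
    change G.Adj (![a, b, c, d, e] i) (![a, b, c, d, e] j) ↔ bull.Adj i j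
    fin_cases i <;> fin_cases j <;> simp_all [bull, G.adj_comm]

/-- The class of bull-free graphs is closed under complementation. -/
lemma BullFree.compl {V : Type*} {G : SimpleGraph V} (h : BullFree G) : BullFree Gᶜ := by
  intro a b c d e hab hac hbc hda heb hdb hdc hea hec hde
  have h6 : d ≠ b := by rintro rfl; exact hde heb.symm
  have h7 : d ≠ c := by rintro rfl; exact hdb hbc.symm
  have h8 : e ≠ a := by rintro rfl; exact hde hda
  have h9 : e ≠ c := by rintro rfl; exact hea hac.symm
  have h10 : d ≠ e := by rintro rfl; exact hea hda
  simp only [compl_adj, not_and, not_not] at *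
  exact h e d c a b (hde h10).symm (hec h9) (hdc h7) (hea h8).symm (hdb h6).symm
    (fun t => hda.2 t.symm) hac.2 (fun t => heb.2 t.symm) hbc.2 hab.2

/-- `X` is a module of the subgraph of `G` induced on `H`: every vertex of `H` outside `X` is
complete or anticomplete to `X`. -/
def ModuleIn {V : Type*} (G : SimpleGraph V) (H X : Set V) : Prop :=
  X ⊆ H ∧ ∀ z ∈ H, z ∉ X → (∀ x ∈ X, G.Adj z x) ∨ (∀ x ∈ X, ¬ G.Adj z x)

/-- The subgraph of `G` induced on `H` is prime: a module with at least two vertices is all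
of `H`, i.e. there is no homogeneous set. -/
def PrimeOn {V : Type*} (G : SimpleGraph V) (H : Set V) : Prop :=
  ∀ X, ModuleIn G H X → X.Nontrivial → X = H

lemma ModuleIn.of_compl {V : Type*} {G : SimpleGraph V} {H X : Set V} (h : ModuleIn Gᶜ H X) :
    ModuleIn G H X := by
  refine ⟨h.1, fun z hz hzX => ?_⟩
  have hne : ∀ x ∈ X, z ≠ x := fun x hx e => hzX (e ▸ hx)
  rcases h.2 z hz hzX with h | h
  · exact Or.inr fun x hx => ((compl_adj ..).1 (h x hx)).2
  · refine Or.inl fun x hx => ?_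
    by_contra hc
    exact h x hx ((compl_adj ..).2 ⟨hne x hx, hc⟩)

lemma PrimeOn.compl {V : Type*} {G : SimpleGraph V} {H : Set V} (h : PrimeOn G H) :
    PrimeOn Gᶜ H := fun X hX hn => h X hX.of_compl hn

/-- A prime graph on at least three vertices is connected: every cut is crossed by an edge. -/
lemma PrimeOn.cross {V : Type*} {G : SimpleGraph V} {H : Set V} (h : PrimeOn G H)
    (h3 : ∀ a b, ¬ H ⊆ {a, b}) {A : Set V} (hA : A ⊆ H) (hA0 : A.Nonempty)
    (hB0 : (H \ A).Nonempty) : ∃ a ∈ A, ∃ b ∈ H \ A, G.Adj a b := by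
  by_contra! hc
  by_cases hAn : A.Nontrivial
  · have := h A ⟨hA, fun z hz hzA => Or.inr fun x hx t => hc x hx z ⟨hz, hzA⟩ t.symm⟩ hAn
    simp [this] at hB0
  by_cases hBn : (H \ A).Nontrivial
  · have := h (H \ A) ⟨Set.sdiff_subset, fun z hz hzA => Or.inr fun x hx t =>
      hc z (by simpa [hz] using hzA) x hx t⟩ hBn
    obtain ⟨a, ha⟩ := hA0
    have h' : a ∈ H := hA ha
    rw [← this] at h'
    exact h'.2 ha
  rw [Set.not_nontrivial_iff] at hAn hBn
  obtain ⟨a, ha⟩ := hA0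
  obtain ⟨b, hb⟩ := hB0
  refine h3 a b fun x hx => ?_
  by_cases hxA : x ∈ A
  · exact Or.inl (hAn hxA ha)
  · exact Or.inr (hBn ⟨hx, hxA⟩ hb)

/-- Complementary form of `PrimeOn.cross`: every cut of a prime graph is crossed by a
non-edge. -/
lemma PrimeOn.cross_compl {V : Type*} {G : SimpleGraph V} {H : Set V} (h : PrimeOn G H)
    (h3 : ∀ a b, ¬ H ⊆ {a, b}) {A : Set V} (hA : A ⊆ H) (hA0 : A.Nonempty)
    (hB0 : (H \ A).Nonempty) : ∃ a ∈ A, ∃ b ∈ H \ A, ¬ G.Adj a b := by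
  obtain ⟨a, ha, b, hb, hab⟩ := h.compl.cross h3 hA hA0 hB0
  exact ⟨a, ha, b, hb, ((compl_adj ..).1 hab).2⟩

lemma nontrivial_of_not_subset_pair {V : Type*} {H : Set V} [Nonempty V]
    (h3 : ∀ a b : V, ¬ H ⊆ {a, b}) : H.Nontrivial := by
  by_contra hc
  rw [Set.not_nontrivial_iff] at hc
  rcases H.eq_empty_or_nonempty with rfl | ⟨a, ha⟩
  · exact h3 (Classical.arbitrary V) (Classical.arbitrary V) (Set.empty_subset _)
  · exact h3 a a fun x hx => Or.inl (hc hx ha)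

/-! ### A center and an anticenter force a homogeneous set -/

/-- Let `v` be complete to a prime set `H` in a bull-free graph. A non-neighbour `u` of `v` with
a neighbour in `H` is adjacent to all of `H` except for a clique: otherwise a component of the
complement of `H \ N(u)` would be a proper module of `H`. -/
lemma BullFree.isClique_nonnbrs {V : Type*} {G : SimpleGraph V} {H : Set V} (hb : BullFree G)
    (hp : PrimeOn G H) {v u : V} (hv : ∀ h ∈ H, G.Adj v h)
    (huv : ¬ G.Adj u v) (hu : ∃ h ∈ H, G.Adj u h) :
    G.IsClique {h | h ∈ H ∧ ¬ G.Adj u h} := by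
  intro z₁ hz₁ z₂ hz₂ hne
  by_contra hnadj
  let r : V → V → Prop := fun a b => a ∈ H ∧ ¬ G.Adj u a ∧ b ∈ H ∧ ¬ G.Adj u b ∧ ¬ G.Adj a b
  let D : Set V := {d | Relation.ReflTransGen r z₁ d}
  have hDZ : ∀ d ∈ D, d ∈ H ∧ ¬ G.Adj u d := by
    intro d hd
    induction hd with
    | refl => exact hz₁
    | tail _ h _ => exact ⟨h.2.2.1, h.2.2.2.1⟩
  have hmod : ModuleIn G H D := by
    refine ⟨fun d hd => (hDZ d hd).1, fun z hz hzD => ?_⟩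
    by_cases hzu : G.Adj u z
    · -- adjacency of `z` is constant along the non-edges generating `D`
      have step : ∀ a b, r a b → G.Adj z a → G.Adj z b := by
        rintro a b ⟨ha, hua, hbH, hub, hab⟩ hza
        by_contra hzb
        exact hb v z a b u (hv z hz) (hv a ha) hza (hv b hbH).symm hzu
          (fun t => hzb t.symm) (fun t => hab t.symm) huv hua (fun t => hub t.symm)
      by_cases h1 : G.Adj z z₁
      · left
        intro x hx
        induction hx with
        | refl => exact h1
        | tail _ h ih => exact step _ _ h ih
      · right
        intro x hx
        induction hx with
        | refl => exact h1
        | tail _ h ih =>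
          exact fun t => ih (step _ _ ⟨h.2.2.1, h.2.2.2.1, h.1, h.2.1,
            fun t => h.2.2.2.2 t.symm⟩ t)
    · left
      intro x hx
      by_contra hzx
      exact hzD (Relation.ReflTransGen.tail hx
        ⟨(hDZ x hx).1, (hDZ x hx).2, hz, hzu, fun t => hzx t.symm⟩)
  have hDH := hp D hmod ⟨z₁, Relation.ReflTransGen.refl, z₂,
    Relation.ReflTransGen.single ⟨hz₁.1, hz₁.2, hz₂.1, hz₂.2, hnadj⟩, hne⟩
  obtain ⟨h, hh, huh⟩ := hu
  exact (hDZ h (hDH ▸ hh)).2 huh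

/-- Complementary form of `BullFree.isClique_nonnbrs`. -/
lemma BullFree.isIndep_nbrs {V : Type*} {G : SimpleGraph V} {H : Set V} (hb : BullFree G)
    (hp : PrimeOn G H) {v u : V} (hvH : v ∉ H) (huH : u ∉ H)
    (hv : ∀ h ∈ H, ¬ G.Adj v h) (huv : G.Adj u v) (hu : ∃ h ∈ H, ¬ G.Adj u h) :
    ∀ a ∈ H, ∀ b ∈ H, G.Adj u a → G.Adj u b → ¬ G.Adj a b := by
  intro a ha b hbH hua hub hab
  have := hb.compl.isClique_nonnbrs hp.compl (v := v) (u := u)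
    (fun h hh => (compl_adj ..).2 ⟨fun e => hvH (e ▸ hh), hv h hh⟩)
    (fun t => ((compl_adj ..).1 t).2 huv)
    (by
      obtain ⟨h, hh, hn⟩ := hu
      exact ⟨h, hh, (compl_adj ..).2 ⟨fun e => huH (e ▸ hh), hn⟩⟩)
  have h2 := this (x := a) ⟨ha, fun t => ((compl_adj ..).1 t).2 hua⟩ (y := b)
    ⟨hbH, fun t => ((compl_adj ..).1 t).2 hub⟩ hab.ne
  exact ((compl_adj ..).1 h2).2 hab

/-- `u` lies outside `H` and is neither complete nor anticomplete to `H`. -/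
def Mixed {V : Type*} (G : SimpleGraph V) (H : Set V) (u : V) : Prop :=
  u ∉ H ∧ (∃ h ∈ H, G.Adj u h) ∧ ∃ h ∈ H, ¬ G.Adj u h

lemma PrimeOn.mixed_edge {V : Type*} {G : SimpleGraph V} {H : Set V} (hp : PrimeOn G H)
    (h3 : ∀ a b, ¬ H ⊆ {a, b}) {r : V} (hr : Mixed G H r) :
    ∃ h₁ ∈ H, G.Adj r h₁ ∧ ∃ h₂ ∈ H, ¬ G.Adj r h₂ ∧ G.Adj h₁ h₂ := by
  obtain ⟨h, hh, hn⟩ := hr.2.2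
  obtain ⟨h₁, ⟨hh₁, hr₁⟩, h₂, ⟨hh₂, hr₂⟩, h12⟩ :=
    hp.cross h3 (A := {h | h ∈ H ∧ G.Adj r h}) (fun h hh => hh.1) hr.2.1
      ⟨h, hh, fun t => hn t.2⟩
  exact ⟨h₁, hh₁, hr₁, h₂, hh₂, fun t => hr₂ ⟨hh₂, t⟩, h12⟩

lemma PrimeOn.mixed_nonedge {V : Type*} {G : SimpleGraph V} {H : Set V} (hp : PrimeOn G H)
    (h3 : ∀ a b, ¬ H ⊆ {a, b}) {r : V} (hr : Mixed G H r) :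
    ∃ h₁ ∈ H, G.Adj r h₁ ∧ ∃ h₂ ∈ H, ¬ G.Adj r h₂ ∧ ¬ G.Adj h₁ h₂ := by
  obtain ⟨h, hh, hn⟩ := hr.2.2
  obtain ⟨h₁, ⟨hh₁, hr₁⟩, h₂, ⟨hh₂, hr₂⟩, h12⟩ :=
    hp.cross_compl h3 (A := {h | h ∈ H ∧ G.Adj r h}) (fun h hh => hh.1) hr.2.1
      ⟨h, hh, fun t => hn t.2⟩
  exact ⟨h₁, hh₁, hr₁, h₂, hh₂, fun t => hr₂ ⟨hh₂, t⟩, h12⟩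

/-- The vertices that every module containing `H` is forced to absorb when no mixed vertex sees
an anticenter of `H`: the mixed vertices, and then repeatedly the centers of `H` with a
non-neighbour among the vertices already absorbed. -/
inductive Absorbed {V : Type*} (G : SimpleGraph V) (H : Set V) : V → Prop
  | mixed {r} : Mixed G H r → Absorbed G H r
  | center {p x} : Absorbed G H p → x ∉ H → (∀ h ∈ H, G.Adj x h) → x ≠ p → ¬ G.Adj x p →
      Absorbed G H x

/-- If a prime set `H` in a prime bull-free graph has an anticenter, then some mixed vertex is
adjacent to an anticenter. Otherwise no absorbed vertex would be adjacent to an anticenter, and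
`H` together with the absorbed vertices would be a module missing the anticenters. -/
lemma BullFree.exists_mixed_adj_anticenter {V : Type*} {G : SimpleGraph V} {H : Set V}
    (hb : BullFree G) (hG : PrimeOn G Set.univ) (hp : PrimeOn G H) (h3 : ∀ a b, ¬ H ⊆ {a, b})
    {y₀ : V} (hy₀H : y₀ ∉ H) (hy₀ : ∀ h ∈ H, ¬ G.Adj y₀ h)
    (hR : ∀ r, Mixed G H r → ∀ y, y ∉ H → (∀ h ∈ H, ¬ G.Adj y h) → ¬ G.Adj r y) : False := by
  have : Nonempty V := ⟨y₀⟩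
  have hnt : H.Nontrivial := nontrivial_of_not_subset_pair h3
  obtain ⟨h₀, hh₀⟩ := hnt.nonempty
  have hnbr : ∀ z, Absorbed G H z → z ∉ H ∧ ∃ h ∈ H, G.Adj z h := by
    intro z hz
    cases hz with
    | mixed hr => exact ⟨hr.1, hr.2.1⟩
    | center _ hx hxH _ _ => exact ⟨hx, h₀, hh₀, hxH _ hh₀⟩
  have key : ∀ z, Absorbed G H z → ∀ y, y ∉ H → (∀ h ∈ H, ¬ G.Adj y h) → ¬ G.Adj z y ∧
      ∀ x, x ∉ H → (∀ h ∈ H, G.Adj x h) → x ≠ z → ¬ G.Adj x z → ¬ G.Adj x y := by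
    intro z hz y hyH hy
    induction hz with
    | @mixed r hr =>
      refine ⟨hR r hr y hyH hy, fun x hxH hx hne hxr hxy => ?_⟩
      obtain ⟨h₁, hh₁, hr₁, h₂, hh₂, hr₂, h12⟩ := hp.mixed_edge h3 hr
      exact hb x h₁ h₂ y r (hx _ hh₁) (hx _ hh₂) h12 hxy.symm hr₁ (hy _ hh₁) (hy _ hh₂)
        (fun t => hxr t.symm) hr₂ (fun t => hR r hr y hyH hy t.symm)
    | @center p z hpA hzH hz hne hzp ih =>
      have hzy := ih.2 z hzH hz hne hzp
      refine ⟨hzy, fun x hxH hx hxz hnxz hxy => ?_⟩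
      by_cases hxp : x = p
      · exact ih.1 (hxp ▸ hxy)
      by_cases hadj : G.Adj x p
      · obtain ⟨-, h, hh, hph⟩ := hnbr p hpA
        exact hb x h p y z (hx _ hh) hadj hph.symm hxy.symm (hz _ hh) (hy _ hh)
          (fun t => ih.1 t.symm) (fun t => hnxz t.symm) hzp (fun t => hzy t.symm)
      · exact ih.2 x hxH hx hxp hadj hxy
  have hmod : ModuleIn G Set.univ (H ∪ {z | Absorbed G H z}) := by
    refine ⟨Set.subset_univ _, fun z _ hz => ?_⟩
    have hzH : z ∉ H := fun t => hz (Or.inl t)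
    have hzA : ¬ Absorbed G H z := fun t => hz (Or.inr t)
    by_cases hc : ∀ h ∈ H, G.Adj z h
    · left
      rintro x (hx | hx)
      · exact hc x hx
      · by_contra hn
        exact hzA (.center hx hzH hc (fun e => hzA (e ▸ hx)) hn)
    · have ha : ∀ h ∈ H, ¬ G.Adj z h := by
        intro h hh t
        push Not at hc
        exact hzA (.mixed ⟨hzH, ⟨h, hh, t⟩, hc⟩)
      right
      rintro x (hx | hx)
      · exact ha x hx
      · exact fun t => (key x hx z hzH ha).1 t.symm
  have := hG _ hmod (hnt.mono Set.subset_union_left)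
  have hy : y₀ ∈ H ∪ {z | Absorbed G H z} := this ▸ Set.mem_univ _
  rcases hy with hy | hy
  · exact hy₀H hy
  · obtain ⟨-, h, hh, t⟩ := hnbr _ hy
    exact hy₀ h hh t

/-- In a prime bull-free graph a prime set that is not the union of a clique and a stable set
cannot have both a center and an anticenter. -/
lemma BullFree.no_center_anticenter {V : Type*} {G : SimpleGraph V} {H : Set V}
    (hb : BullFree G) (hG : PrimeOn G Set.univ) (hp : PrimeOn G H) (h3 : ∀ a b, ¬ H ⊆ {a, b})
    (hsplit : ∀ Q ⊆ H, G.IsClique Q → ∃ a ∈ H \ Q, ∃ b ∈ H \ Q, G.Adj a b)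
    {x₀ y₀ : V} (hx₀H : x₀ ∉ H) (hx₀ : ∀ h ∈ H, G.Adj x₀ h)
    (hy₀H : y₀ ∉ H) (hy₀ : ∀ h ∈ H, ¬ G.Adj y₀ h) : False := by
  by_cases hB : ∀ r, Mixed G H r → ∀ y, y ∉ H → (∀ h ∈ H, ¬ G.Adj y h) → ¬ G.Adj r y
  · exact hb.exists_mixed_adj_anticenter hG hp h3 hy₀H hy₀ hB
  by_cases hA : ∀ r, Mixed G H r → ∀ x, x ∉ H → (∀ h ∈ H, G.Adj x h) → r ≠ x → G.Adj r x
  · refine hb.compl.exists_mixed_adj_anticenter hG.compl hp.compl h3 hx₀H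
      (fun h hh t => ((compl_adj ..).1 t).2 (hx₀ h hh)) ?_
    rintro r ⟨hrH, ⟨h₁, hh₁, hr₁⟩, ⟨h₂, hh₂, hr₂⟩⟩ x hxH hx hrx
    rw [compl_adj] at hrx hr₁
    refine hrx.2 (hA r ⟨hrH, ⟨h₂, hh₂, ?_⟩, ⟨h₁, hh₁, hr₁.2⟩⟩ x hxH ?_ hrx.1)
    · by_contra hc
      exact hr₂ ((compl_adj ..).2 ⟨fun e => hrH (e ▸ hh₂), hc⟩)
    · intro h hh
      by_contra hc
      exact hx h hh ((compl_adj ..).2 ⟨fun e => hxH (e ▸ hh), hc⟩)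
  push Not at hA hB
  obtain ⟨r, hr, y, hyH, hy, hry⟩ := hB
  obtain ⟨r', hr', x, hxH, hx, hne', hr'x⟩ := hA
  -- no mixed vertex has both defects, since `H` would then be a split graph
  have hno : ∀ r, Mixed G H r → ∀ y, y ∉ H → (∀ h ∈ H, ¬ G.Adj y h) → G.Adj r y →
      ∀ x, x ∉ H → (∀ h ∈ H, G.Adj x h) → r ≠ x → G.Adj r x := by
    intro r hr y hyH hy hry x hxH hx hne
    by_contra hrx
    have hQ := hb.isClique_nonnbrs hp hx hrx hr.2.1
    obtain ⟨a, ⟨ha, haQ⟩, b, ⟨hbH, hbQ⟩, hab⟩ := hsplit _ (fun h hh => hh.1) hQ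
    have hra : G.Adj r a := by by_contra t; exact haQ ⟨ha, t⟩
    have hrb : G.Adj r b := by by_contra t; exact hbQ ⟨hbH, t⟩
    exact hb.isIndep_nbrs hp hyH hr.1 hy hry hr.2.2 a ha b hbH hra hrb hab
  by_cases hxy : G.Adj x y
  · -- a bull on the non-edge between `r'` and the center `x`
    have hr'y : ¬ G.Adj r' y := fun t => hr'x (hno r' hr' y hyH hy t x hxH hx hne')
    obtain ⟨h₁, hh₁, hr₁, h₂, hh₂, hr₂, h12⟩ := hp.mixed_edge h3 hr'
    exact hb x h₁ h₂ y r' (hx _ hh₁) (hx _ hh₂) h12 hxy.symm hr₁ (hy _ hh₁) (hy _ hh₂)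
      hr'x hr₂ (fun t => hr'y t.symm)
  · -- the complementary bull on the edge between `r` and the anticenter `y`
    have hrx : G.Adj r x := hno r hr y hyH hy hry x hxH hx (by
      rintro rfl
      exact hxy hry)
    obtain ⟨h₁, hh₁, hr₁, h₂, hh₂, hr₂, h12⟩ := hp.mixed_nonedge h3 hr
    exact hb r x h₁ y h₂ hrx hr₁ (hx _ hh₁) hry.symm (hx _ hh₂).symm
      (fun t => hxy t.symm) (hy _ hh₁) (fun t => hr₂ t.symm) (fun t => h12 t.symm) (hy _ hh₂)

/-! ### Cliques inside a vertex set -/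

section Cliques

variable {V : Type*} [Finite V] {G : SimpleGraph V}

lemma bddAbove_cliqueWeights (G : SimpleGraph V) (w : V → ℕ) (s : Set V) :
    BddAbove {n | ∃ t : Finset V, ↑t ⊆ s ∧ G.IsClique (↑t : Set V) ∧ ∑ v ∈ t, w v = n} := by
  have := Fintype.ofFinite V
  refine ⟨∑ v, w v, ?_⟩
  rintro n ⟨t, -, -, rfl⟩
  exact Finset.sum_le_sum_of_subset (Finset.subset_univ t)

lemma le_wCliqueNumOn {w : V → ℕ} {s : Set V} {t : Finset V} (hts : ↑t ⊆ s)
    (ht : G.IsClique (↑t : Set V)) : ∑ v ∈ t, w v ≤ wCliqueNumOn G w s :=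
  le_csSup (bddAbove_cliqueWeights G w s) ⟨t, hts, ht, rfl⟩

lemma exists_wCliqueNumOn (G : SimpleGraph V) (w : V → ℕ) (s : Set V) :
    ∃ t : Finset V, ↑t ⊆ s ∧ G.IsClique (↑t : Set V) ∧ ∑ v ∈ t, w v = wCliqueNumOn G w s := by
  have hne : {n | ∃ t : Finset V, (↑t : Set V) ⊆ s ∧ G.IsClique (↑t : Set V) ∧
      ∑ v ∈ t, w v = n}.Nonempty := ⟨0, ∅, by simp, by simp, by simp⟩
  exact Nat.sSup_mem hne (bddAbove_cliqueWeights G w s)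

lemma wCliqueNumOn_lt {w : V → ℕ} {s : Set V} {n : ℕ}
    (h : ∀ t : Finset V, ↑t ⊆ s → G.IsClique (↑t : Set V) → ∑ v ∈ t, w v < n) :
    wCliqueNumOn G w s < n := by
  obtain ⟨t, hts, ht, e⟩ := exists_wCliqueNumOn G w s
  exact e ▸ h t hts ht

lemma cliqueNumOn_eq {V : Type*} (G : SimpleGraph V) (s : Set V) :
    cliqueNumOn G s = wCliqueNumOn G (fun _ => 1) s := by
  simp [cliqueNumOn, wCliqueNumOn, isNClique_iff]

lemma le_cliqueNumOn {s : Set V} {t : Finset V} (hts : ↑t ⊆ s)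
    (ht : G.IsClique (↑t : Set V)) : t.card ≤ cliqueNumOn G s := by
  simpa [cliqueNumOn_eq] using le_wCliqueNumOn (w := fun _ => 1) hts ht

lemma exists_cliqueNumOn (G : SimpleGraph V) (s : Set V) :
    ∃ t : Finset V, ↑t ⊆ s ∧ G.IsClique (↑t : Set V) ∧ t.card = cliqueNumOn G s := by
  simpa [cliqueNumOn_eq] using exists_wCliqueNumOn G (fun _ => 1) s

lemma cliqueNumOn_lt {s : Set V} {n : ℕ}
    (h : ∀ t : Finset V, ↑t ⊆ s → G.IsClique (↑t : Set V) → t.card < n) :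
    cliqueNumOn G s < n := by
  obtain ⟨t, hts, ht, e⟩ := exists_cliqueNumOn G s
  exact e ▸ h t hts ht

lemma cliqueNumOn_mono {s t : Set V} (h : s ⊆ t) : cliqueNumOn G s ≤ cliqueNumOn G t := by
  obtain ⟨K, hK, hc, e⟩ := exists_cliqueNumOn G s
  exact e ▸ le_cliqueNumOn (hK.trans h) hc

lemma cliqueNumOn_pos {s : Set V} (h : s.Nonempty) : 0 < cliqueNumOn G s := by
  obtain ⟨x, hx⟩ := h
  have := le_cliqueNumOn (G := G) (s := s) (t := {x}) (by simpa using hx) (by simp)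
  rwa [Finset.card_singleton] at this

end Cliques

section Exchange

variable {V : Type*} {G : SimpleGraph V}

open scoped Classical in
/-- If `A` is complete or anticomplete to each vertex of a clique `K` outside `A`, and `K` meets
`A`, then replacing the part of `K` inside `A` by any clique `L ⊆ A` yields a clique. -/
lemma isClique_exchange {A : Set V} {K L : Finset V} (hK : G.IsClique (↑K : Set V))
    (hL : G.IsClique (↑L : Set V)) (hLA : ↑L ⊆ A) (hKA : ∃ x ∈ K, x ∈ A)
    (hom : ∀ z ∈ K, z ∉ A → (∀ a ∈ A, G.Adj z a) ∨ (∀ a ∈ A, ¬ G.Adj z a)) :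
    G.IsClique (↑(K.filter (· ∉ A) ∪ L) : Set V) := by
  obtain ⟨x, hxK, hxA⟩ := hKA
  have hcomp : ∀ z ∈ K, z ∉ A → ∀ a ∈ A, G.Adj z a := by
    intro z hz hzA
    rcases hom z hz hzA with h | h
    · exact h
    · exact absurd (hK hz hxK (by rintro rfl; exact hzA hxA)) (h x hxA)
  intro a ha b hb hab
  simp only [Finset.coe_union, Finset.coe_filter, Set.mem_union, Set.mem_ofPred_eq,
    Finset.mem_coe] at ha hb
  rcases ha with ha | ha <;> rcases hb with hb | hb
  · exact hK ha.1 hb.1 hab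
  · exact hcomp a ha.1 ha.2 b (hLA hb)
  · exact (hcomp b hb.1 hb.2 a (hLA ha)).symm
  · exact hL ha hb hab

open scoped Classical in
lemma sum_exchange {A : Set V} {K L : Finset V} (hLA : ↑L ⊆ A) (w : V → ℕ) :
    ∑ v ∈ K.filter (· ∉ A) ∪ L, w v = ∑ v ∈ K.filter (· ∉ A), w v + ∑ v ∈ L, w v := by
  refine Finset.sum_union (Finset.disjoint_left.2 fun x hx hxL => ?_)
  exact (Finset.mem_filter.1 hx).2 (hLA hxL)

open scoped Classical in
lemma sum_split (A : Set V) (K : Finset V) (w : V → ℕ) :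
    ∑ v ∈ K, w v = ∑ v ∈ K.filter (· ∉ A), w v + ∑ v ∈ K.filter (· ∈ A), w v := by
  rw [add_comm]
  exact (Finset.sum_filter_add_sum_filter_not K (· ∈ A) w).symm

end Exchange

/-! ### Perfection of a vertex set -/

/-- The subgraph of `G` induced on `t` has a proper colouring with colours `0, …, n - 1`. -/
def ColOn {V : Type*} (G : SimpleGraph V) (t : Set V) (n : ℕ) : Prop :=
  ∃ c : V → ℕ, (∀ v ∈ t, c v < n) ∧ ∀ u ∈ t, ∀ v ∈ t, G.Adj u v → c u ≠ c v

/-- The subgraph of `G` induced on `s` is perfect, phrased through vertex sets of `G`. -/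
def Perf {V : Type*} (G : SimpleGraph V) (s : Set V) : Prop :=
  ∀ t ⊆ s, ColOn G t (cliqueNumOn G t)

lemma colOn_iff {V : Type*} {G : SimpleGraph V} {t : Set V} {n : ℕ} :
    ColOn G t n ↔ (G.induce t).Colorable n := by
  classical
  constructor
  · rintro ⟨c, hc, hp⟩
    exact ⟨Coloring.mk (fun v : t => (⟨c v, hc v v.2⟩ : Fin n)) fun {u v} huv e =>
      hp u u.2 v v.2 huv (congrArg Fin.val e)⟩
  · rintro ⟨C⟩
    refine ⟨fun v => if h : v ∈ t then (C ⟨v, h⟩ : ℕ) else 0, fun v hv => ?_,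
      fun u hu v hv huv => ?_⟩
    · simp [hv]
    · simp only [hu, hv, dif_pos]
      exact fun e => C.valid (v := ⟨u, hu⟩) (w := ⟨v, hv⟩) huv (Fin.ext e)

lemma ColOn.mono {V : Type*} {G : SimpleGraph V} {t : Set V} {m n : ℕ} (h : ColOn G t m)
    (hmn : m ≤ n) : ColOn G t n := by
  obtain ⟨c, h1, h2⟩ := h
  exact ⟨c, fun v hv => (h1 v hv).trans_le hmn, h2⟩

lemma isPerfect_iff {V : Type*} [Finite V] {G : SimpleGraph V} :
    IsPerfect G ↔ Perf G Set.univ := by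
  have key : ∀ s : Set V, (G.induce s).chromaticNumber = (cliqueNumOn G s : ℕ∞) ↔
      ColOn G s (cliqueNumOn G s) := by
    intro s
    rw [colOn_iff, ← chromaticNumber_le_iff_colorable]
    refine ⟨fun h => h.le, fun h => le_antisymm h ?_⟩
    obtain ⟨K, hKs, hK, e⟩ := exists_cliqueNumOn G s
    classical
    rw [← e, show K.card = (K.subtype (· ∈ s)).card by
      rw [Finset.card_subtype, Finset.filter_true_of_mem fun x hx => hKs hx]]
    refine IsClique.card_le_chromaticNumber fun a ha b hb hab => ?_
    exact hK (by simpa using ha) (by simpa using hb) (fun e => hab (Subtype.ext e))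
  exact ⟨fun h t _ => (key t).1 (h t), fun h t => (key t).2 (h t (Set.subset_univ t))⟩

/-- Weighted clique numbers are preserved by induced embeddings. -/
lemma wCliqueNumOn_image {V W : Type*} {H : SimpleGraph W} {G : SimpleGraph V} (f : H ↪g G)
    (w : V → ℕ) (t : Set W) :
    wCliqueNumOn G w (f '' t) = wCliqueNumOn H (fun x => w (f x)) t := by
  classical
  unfold wCliqueNumOn
  congr 1
  ext n
  constructor
  · rintro ⟨K, hKt, hK, rfl⟩
    obtain ⟨L, hLt, rfl⟩ := Finset.subset_set_image_iff.1 hKt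
    refine ⟨L, hLt, fun a ha b hb hab => ?_, ?_⟩
    · exact f.map_rel_iff.1 (hK (Finset.mem_coe.2 (Finset.mem_image_of_mem f ha))
        (Finset.mem_coe.2 (Finset.mem_image_of_mem f hb)) (f.injective.ne hab))
    · rw [Finset.sum_image fun a _ b _ e => f.injective e]
  · rintro ⟨L, hLt, hL, rfl⟩
    refine ⟨L.image f, ?_, ?_, ?_⟩
    · rw [Finset.coe_image]
      exact Set.image_mono hLt
    · rw [Finset.coe_image]
      rintro _ ⟨a, ha, rfl⟩ _ ⟨b, hb, rfl⟩ hab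
      exact f.map_rel_iff.2 (hL ha hb fun e => hab (congrArg f e))
    · rw [Finset.sum_image fun a _ b _ e => f.injective e]

lemma colOn_image {V W : Type*} {H : SimpleGraph W} {G : SimpleGraph V} (f : H ↪g G)
    {t : Set W} {n : ℕ} : ColOn G (f '' t) n ↔ ColOn H t n := by
  constructor
  · rintro ⟨c, h1, h2⟩
    exact ⟨fun x => c (f x), fun v hv => h1 _ ⟨v, hv, rfl⟩, fun u hu v hv huv =>
      h2 _ ⟨u, hu, rfl⟩ _ ⟨v, hv, rfl⟩ (f.map_rel_iff.2 huv)⟩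
  · rintro ⟨c, h1, h2⟩
    have hext : ∀ x, Function.extend f c 0 (f x) = c x := fun x => f.injective.extend_apply c 0 x
    refine ⟨Function.extend f c 0, ?_, ?_⟩
    · rintro _ ⟨v, hv, rfl⟩
      rw [hext]
      exact h1 v hv
    · rintro _ ⟨u, hu, rfl⟩ _ ⟨v, hv, rfl⟩ huv
      rw [hext, hext]
      exact h2 u hu v hv (f.map_rel_iff.1 huv)

lemma perf_range_iff {V W : Type*} [Finite W] {H : SimpleGraph W}
    {G : SimpleGraph V} (f : H ↪g G) : Perf G (Set.range f) ↔ IsPerfect H := by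
  have e : ∀ t : Set W, cliqueNumOn G (f '' t) = cliqueNumOn H t := fun t => by
    rw [cliqueNumOn_eq, cliqueNumOn_eq, wCliqueNumOn_image]
  rw [isPerfect_iff]
  constructor
  · intro h t _
    rw [← e, ← colOn_image f]
    exact h _ (Set.image_subset_range f t)
  · intro h t ht
    obtain ⟨t, rfl⟩ := Set.subset_range_iff_exists_image_eq.1 ht
    rw [e, colOn_image f]
    exact h t (Set.subset_univ t)

lemma perf_iff {V : Type*} [Finite V] {G : SimpleGraph V} {s : Set V} :
    IsPerfect (G.induce s) ↔ Perf G s := by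
  rw [← perf_range_iff (Embedding.induce s)]
  exact iff_of_eq (congrArg (Perf G) Subtype.range_coe)

section Perfection

variable {V : Type*} {G : SimpleGraph V}

lemma Perf.mono {s t : Set V} (h : Perf G s) (hts : t ⊆ s) : Perf G t :=
  fun r hr => h r (hr.trans hts)

lemma perf_empty (G : SimpleGraph V) : Perf G ∅ := by
  intro t ht
  have : t = ∅ := Set.subset_empty_iff.1 ht
  exact ⟨0, by simp [this], by simp [this]⟩

/-- In a perfect graph every vertex lies in a stable set meeting all maximum cliques, namely
its class in an optimal colouring. -/
lemma Perf.exists_stable [Finite V] {s : Set V} (h : Perf G s) {t : Set V} (hts : t ⊆ s)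
    {x : V} (hx : x ∈ t) : ∃ S ⊆ t, x ∈ S ∧ (∀ a ∈ S, ∀ b ∈ S, ¬ G.Adj a b) ∧
      cliqueNumOn G (t \ S) < cliqueNumOn G t := by
  obtain ⟨c, hc, hp⟩ := h t hts
  refine ⟨{v | v ∈ t ∧ c v = c x}, fun v hv => hv.1, ⟨hx, rfl⟩,
    fun a ha b hb hab => hp a ha.1 b hb.1 hab (ha.2.trans hb.2.symm), ?_⟩
  refine cliqueNumOn_lt fun K hK hKc => ?_
  have hmap : ∀ v ∈ K, c v ∈ (Finset.range (cliqueNumOn G t)).erase (c x) := by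
    intro v hv
    have := hK hv
    rw [Finset.mem_erase, Finset.mem_range]
    exact ⟨fun e => this.2 ⟨this.1, e⟩, hc v this.1⟩
  have hcard := Finset.card_le_card_of_injOn c hmap fun a ha b hb e => by
    by_contra hab
    exact hp a (hK ha).1 b (hK hb).1 (hKc ha hb hab) e
  rw [Finset.card_erase_of_mem (Finset.mem_range.2 (hc x hx)), Finset.card_range] at hcard
  have := cliqueNumOn_pos (G := G) ⟨x, hx⟩
  omega

/-- Lovász's criterion: it suffices that every nonempty induced subgraph has a stable set
meeting all its maximum cliques. -/
lemma perf_of_exists_stable [Finite V] {s : Set V}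
    (h : ∀ t ⊆ s, t.Nonempty → ∃ S ⊆ t, (∀ a ∈ S, ∀ b ∈ S, ¬ G.Adj a b) ∧
      cliqueNumOn G (t \ S) < cliqueNumOn G t) : Perf G s := by
  have key : ∀ n, ∀ t ⊆ s, cliqueNumOn G t = n → ColOn G t n := by
    intro n
    induction n using Nat.strong_induction_on with
    | _ n ih =>
      intro t hts htn
      rcases t.eq_empty_or_nonempty with rfl | hne
      · exact ⟨0, by simp, by simp⟩
      obtain ⟨S, hSt, hS, hlt⟩ := h t hts hne
      obtain ⟨c, hc, hp⟩ := ih _ (htn ▸ hlt) (t \ S) (Set.sdiff_subset.trans hts) rfl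
      classical
      -- the stable set receives the colour `ω(t \ S)`, unused on the rest
      refine ⟨fun v => if v ∈ S then cliqueNumOn G (t \ S) else c v, fun v hv => ?_,
        fun u hu v hv huv => ?_⟩
      · by_cases hvS : v ∈ S
        · simp only [hvS, if_true]
          omega
        · simp only [hvS, if_false]
          have := hc v ⟨hv, hvS⟩
          omega
      · by_cases huS : u ∈ S <;> by_cases hvS : v ∈ S <;> simp only [huS, hvS, if_true, if_false]
        · exact absurd huv (hS u huS v hvS)
        · exact (hc v ⟨hv, hvS⟩).ne'
        · exact (hc u ⟨hu, huS⟩).ne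
        · exact hp u ⟨hu, huS⟩ v ⟨hv, hvS⟩ huv
  exact fun t ht => key _ t ht rfl

/-- Lovász's substitution lemma: substituting a perfect graph `A` for a vertex `x` of a perfect
graph yields a perfect graph. -/
lemma Perf.substitute [Finite V] {A Y : Set V} {x : V} (hA : Perf G A)
    (hY : Perf G (insert x Y)) (hxA : x ∈ A) (hdisj : Disjoint A Y)
    (hom : ∀ y ∈ Y, (∀ a ∈ A, G.Adj y a) ∨ (∀ a ∈ A, ¬ G.Adj y a)) : Perf G (A ∪ Y) := by
  classical
  have hdis : ∀ y ∈ Y, y ∉ A := fun y hy hyA => Set.disjoint_left.1 hdisj hyA hy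
  refine perf_of_exists_stable fun t ht hne => ?_
  have htY : ∀ z ∈ t, z ∉ A → z ∈ Y := fun z hz hzA => (ht hz).resolve_left hzA
  by_cases hmeet : ∃ z ∈ t, z ∈ A
  · obtain ⟨z, hzt, hzA⟩ := hmeet
    obtain ⟨S, hSt, hxS, hS, hSlt⟩ := hY.exists_stable (t := insert x (t ∩ Y))
      (Set.insert_subset_insert Set.inter_subset_right) (Set.mem_insert _ _)
    obtain ⟨T, hTt, -, hT, hTlt⟩ := hA.exists_stable (t := t ∩ A) Set.inter_subset_right
      (x := z) ⟨hzt, hzA⟩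
    have hSY : ∀ a ∈ S, a ≠ x → a ∈ t ∧ a ∈ Y := fun a ha hax => (hSt ha).resolve_left hax
    have hST : ∀ a ∈ S, a ≠ x → ∀ b ∈ A, ¬ G.Adj a b := by
      intro a ha hax
      rcases hom a (hSY a ha hax).2 with h | h
      · exact absurd (h x hxA) (hS a ha x hxS)
      · exact h
    have hle : cliqueNumOn G (insert x (t ∩ Y)) ≤ cliqueNumOn G t := by
      obtain ⟨K, hK, hKc, e⟩ := exists_cliqueNumOn G (insert x (t ∩ Y))
      rw [← e]
      by_cases hxK : x ∈ K
      · have hex := isClique_exchange (A := A) (K := K) (L := {z}) hKc (by simp)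
          (by simpa using hzA) ⟨x, hxK, hxA⟩
          (fun y hy hyA => hom y ((hK hy).resolve_left (by rintro rfl; exact hyA hxA)).2)
        refine le_trans ?_ (le_cliqueNumOn (s := t) ?_ hex)
        · have h1 := sum_split A K (fun _ => 1)
          have h2 := sum_exchange (A := A) (K := K) (L := {z}) (by simpa using hzA) (fun _ => 1)
          have h3 : K.filter (· ∈ A) ⊆ {x} := by
            intro y hy
            rw [Finset.mem_filter] at hy
            rw [Finset.mem_singleton]
            by_contra hyx
            exact hdis y ((hK hy.1).resolve_left hyx).2 hy.2
          have h4 := Finset.card_le_card h3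
          simp only [Finset.sum_const, smul_eq_mul, mul_one, Finset.card_singleton]
            at h1 h2 h3 h4
          omega
        · intro y hy
          simp only [Finset.coe_union, Finset.coe_filter, Finset.coe_singleton, Set.mem_union,
            Set.mem_ofPred_eq, Set.mem_singleton_iff] at hy
          rcases hy with hy | rfl
          · exact ((hK hy.1).resolve_left (by rintro rfl; exact hy.2 hxA)).1
          · exact hzt
      · exact le_cliqueNumOn (fun y hy => ((hK hy).resolve_left (by rintro rfl; exact hxK hy)).1)
          hKc
    refine ⟨(S \ {x}) ∪ T, ?_, ?_, ?_⟩
    · rintro a (ha | ha)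
      · exact (hSY a ha.1 ha.2).1
      · exact (hTt ha).1
    · rintro a (ha | ha) b (hb | hb)
      · exact hS a ha.1 b hb.1
      · exact hST a ha.1 ha.2 b (hTt hb).2
      · exact fun t => hST b hb.1 hb.2 a (hTt ha).2 t.symm
      · exact hT a ha b hb
    · refine cliqueNumOn_lt fun Q hQ hQc => ?_
      by_cases hQA : ∃ q ∈ Q, q ∈ A
      · -- enlarge the part of `Q` inside `A` to a maximum clique of `t ∩ A`
        obtain ⟨L, hL, hLc, e⟩ := exists_cliqueNumOn G (t ∩ A)
        have hLA : (L : Set V) ⊆ A := fun y hy => (hL hy).2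
        have hex := isClique_exchange (A := A) (K := Q) hQc hLc hLA hQA
          (fun y hy hyA => hom y (htY y (hQ hy).1 hyA))
        have hsub : (↑(Q.filter (· ∉ A) ∪ L) : Set V) ⊆ t := by
          intro y hy
          simp only [Finset.coe_union, Finset.coe_filter, Set.mem_union, Set.mem_ofPred_eq,
            Finset.mem_coe] at hy
          rcases hy with hy | hy
          · exact (hQ hy.1).1
          · exact (hL hy).1
        have h0 := le_cliqueNumOn hsub hex
        have h1 := sum_split A Q (fun _ => 1)
        have h2 := sum_exchange (A := A) (K := Q) hLA (fun _ => 1)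
        have h3 : (Q.filter (· ∈ A)).card ≤ cliqueNumOn G ((t ∩ A) \ T) := by
          refine le_cliqueNumOn (fun y hy => ?_) (hQc.subset
            (Finset.coe_subset.2 (Finset.filter_subset _ _)))
          simp only [Finset.coe_filter, Set.mem_ofPred_eq] at hy
          exact ⟨⟨(hQ hy.1).1, hy.2⟩, fun hyT => (hQ hy.1).2 (Or.inr hyT)⟩
        simp only [Finset.sum_const, smul_eq_mul, mul_one] at h1 h2
        omega
      · push Not at hQA
        refine lt_of_lt_of_le (lt_of_le_of_lt (le_cliqueNumOn (fun y hy => ?_) hQc) hSlt) hle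
        have hyt := (hQ hy).1
        have hyA := hQA y hy
        exact ⟨Or.inr ⟨hyt, htY y hyt hyA⟩, fun hyS => (hQ hy).2
          (Or.inl ⟨hyS, by rintro rfl; exact hyA hxA⟩)⟩
  · push Not at hmeet
    obtain ⟨z, hz⟩ := hne
    obtain ⟨S, h1, -, h2, h3⟩ := hY.exists_stable (t := t)
      (fun y hy => Or.inr (htY y hy (hmeet y hy))) hz
    exact ⟨S, h1, h2, h3⟩

/-- Adding a vertex whose neighbourhood is a clique preserves perfection. -/
lemma Perf.insert_simplicial [Finite V] {s : Set V} {v : V} (h : Perf G s)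
    (hv : G.IsClique {u | u ∈ s ∧ G.Adj v u}) : Perf G (insert v s) := by
  classical
  intro t ht
  by_cases hvt : v ∈ t
  · have hsub : t \ {v} ⊆ s := fun y hy => (ht hy.1).resolve_left hy.2
    obtain ⟨c, hc, hp⟩ := (h (t \ {v}) hsub).mono (cliqueNumOn_mono (G := G) Set.sdiff_subset)
    have hfin := Set.toFinite {u | u ∈ t ∧ G.Adj v u}
    let N := hfin.toFinset
    have hN : ∀ u, u ∈ N ↔ u ∈ t ∧ G.Adj v u := by simp [N]
    have hclique : G.IsClique (↑(insert v N) : Set V) := by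
      rw [Finset.coe_insert, isClique_insert]
      refine ⟨hv.subset fun u hu => ?_, fun u hu _ => ((hN u).1 hu).2⟩
      have := (hN u).1 hu
      exact ⟨hsub ⟨this.1, this.2.ne'⟩, this.2⟩
    have hcard := le_cliqueNumOn (s := t) (fun u hu => by
      rw [Finset.coe_insert] at hu
      rcases hu with rfl | hu
      · exact hvt
      · exact ((hN u).1 hu).1) hclique
    rw [Finset.card_insert_of_notMem (fun hvN => G.loopless.irrefl v ((hN v).1 hvN).2)] at hcard
    -- fewer than `ω(t)` colours appear around `v`
    obtain ⟨k, hk, hkN⟩ : ∃ k ∈ Finset.range (cliqueNumOn G t), k ∉ N.image c := by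
      by_contra! hcon
      have h1 := Finset.card_le_card hcon
      have h2 := Finset.card_image_le (s := N) (f := c)
      rw [Finset.card_range] at h1
      omega
    have hkN' : ∀ u ∈ t, G.Adj v u → c u ≠ k := fun u hu hvu e =>
      hkN (Finset.mem_image.2 ⟨u, (hN u).2 ⟨hu, hvu⟩, e⟩)
    refine ⟨fun u => if u = v then k else c u, fun u hu => ?_, fun a ha b hb hab => ?_⟩
    · by_cases huv : u = v
      · simpa [huv] using hk
      · simpa [huv] using hc u ⟨hu, huv⟩
    · by_cases hav : a = v <;> by_cases hbv : b = v <;> simp only [hav, hbv, if_true, if_false]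
      · exact absurd (hav.trans hbv.symm) hab.ne
      · exact (hkN' b hb (hav ▸ hab)).symm
      · exact hkN' a ha (hbv ▸ hab.symm)
      · exact hp a ⟨ha, hav⟩ b ⟨hb, hbv⟩ hab
  · exact h t fun y hy => (ht hy).resolve_left (by rintro rfl; exact hvt hy)

lemma perf_pair [Finite V] (G : SimpleGraph V) (a b : V) : Perf G {a, b} := by
  refine Perf.insert_simplicial (Perf.mono (s := insert b ∅)
    ((perf_empty G).insert_simplicial ?_) (by simp)) ?_
  · simp
  · exact fun x hx y hy hxy => absurd ((hx.1 : x = b).trans (hy.1 : y = b).symm) hxy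

/-- Bipartite graphs are perfect. -/
lemma perf_bipartite [Finite V] {s A B : Set V} (hs : s ⊆ A ∪ B)
    (hA : ∀ a ∈ A, ∀ b ∈ A, ¬ G.Adj a b) (hB : ∀ a ∈ B, ∀ b ∈ B, ¬ G.Adj a b) :
    Perf G s := by
  classical
  intro t ht
  by_cases he : ∃ a ∈ t, ∃ b ∈ t, G.Adj a b
  · obtain ⟨a, ha, b, hb, hab⟩ := he
    have h2 : 2 ≤ cliqueNumOn G t := by
      rw [← Finset.card_pair hab.ne]
      refine le_cliqueNumOn ?_ ?_
      · rw [Finset.coe_pair]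
        exact Set.pair_subset ha hb
      · rw [Finset.coe_pair, isClique_pair]
        exact fun _ => hab
    refine ColOn.mono (m := 2) ⟨fun v => if v ∈ A then 0 else 1, fun v _ => ?_,
      fun u hu v hv huv => ?_⟩ h2
    · beta_reduce
      split_ifs <;> omega
    · by_cases huA : u ∈ A <;> by_cases hvA : v ∈ A <;> simp only [huA, hvA, if_true, if_false]
      · exact absurd huv (hA u huA v hvA)
      · omega
      · omega
      · exact absurd huv
          (hB u ((hs (ht hu)).resolve_left huA) v ((hs (ht hv)).resolve_left hvA))
  · push Not at he
    exact ⟨0, fun v hv => cliqueNumOn_pos ⟨v, hv⟩, fun u hu v hv huv => absurd huv (he u hu v hv)⟩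

/-- Every imperfect vertex set contains a minimal one. -/
lemma exists_minimal_imperfect [Finite V] {s : Set V} (h : ¬ Perf G s) :
    ∃ H ⊆ s, ¬ Perf G H ∧ ∀ K ⊂ H, Perf G K := by
  obtain ⟨H, hHs, hH⟩ := exists_minimal_le_of_wellFoundedLT (fun t : Set V => ¬ Perf G t) s h
  exact ⟨H, hHs, hH.prop, fun K hK => not_not.1 (hH.not_prop_of_lt hK)⟩

lemma not_subset_pair_of_imperfect [Finite V] {H : Set V} (h : ¬ Perf G H) (a b : V) :
    ¬ H ⊆ {a, b} := fun hH => h ((perf_pair G a b).mono hH)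

/-- Minimally imperfect graphs are prime, by the substitution lemma. -/
lemma primeOn_of_minimal_imperfect [Finite V] {H : Set V} (h : ¬ Perf G H)
    (hmin : ∀ K ⊂ H, Perf G K) : PrimeOn G H := by
  rintro X ⟨hXH, hX⟩ ⟨x, hx, y, hy, hxy⟩
  by_contra hne
  refine h ?_
  have hsub : insert x (H \ X) ⊂ H := by
    refine ⟨Set.insert_subset (hXH hx) Set.sdiff_subset, fun hsub => ?_⟩
    rcases hsub (hXH hy) with e | e
    · exact hxy e.symm
    · exact e.2 hy
  have := Perf.substitute (hmin X (hXH.ssubset_of_ne hne)) (hmin _ hsub) hx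
    Set.disjoint_sdiff_right (fun z hz => hX z hz.1 hz.2)
  rwa [Set.union_sdiff_cancel hXH] at this

/-- A minimally imperfect graph is not a split graph, as it has no simplicial vertex. -/
lemma not_split_of_minimal_imperfect [Finite V] {H : Set V} (h : ¬ Perf G H)
    (hmin : ∀ K ⊂ H, Perf G K) :
    ∀ Q ⊆ H, G.IsClique Q → ∃ a ∈ H \ Q, ∃ b ∈ H \ Q, G.Adj a b := by
  intro Q hQ hQc
  by_contra! hst
  have hrem : ∀ v ∈ H, ¬ G.IsClique {u | u ∈ H \ {v} ∧ G.Adj v u} := by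
    intro v hv hc
    have := (hmin (H \ {v}) ⟨Set.sdiff_subset, fun hs => (hs hv).2 rfl⟩).insert_simplicial hc
    rw [Set.insert_sdiff_singleton, Set.insert_eq_of_mem hv] at this
    exact h this
  obtain ⟨v, hv⟩ : H.Nonempty := by
    rw [Set.nonempty_iff_ne_empty]
    rintro rfl
    exact h (perf_empty G)
  by_cases hcl : H ⊆ Q
  · exact hrem v hv (hQc.subset fun u hu => hcl hu.1.1)
  · obtain ⟨v, hv, hvQ⟩ := Set.not_subset.1 hcl
    refine hrem v hv (hQc.subset fun u hu => ?_)
    by_contra huQ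
    exact hst v ⟨hv, hvQ⟩ u ⟨hu.1.1, huQ⟩ hu.2

end Perfection

/-! ### Minimally non-perfectly weight divisible graphs -/

section MNWD

variable {V : Type*} [Finite V] {G : SimpleGraph V}

/-- In an MNWD graph the only obstruction to divisibility is a weight `w` on the whole vertex
set; every proper nonempty vertex set can be divided for every positive weight. -/
lemma MNWD.exists_weight (h : MNWD G) : ∃ w : V → ℕ, (∀ v, 0 < w v) ∧
    (∀ P, Perf G P → ¬ wCliqueNumOn G w Pᶜ < wCliqueNumOn G w Set.univ) ∧
    ∀ s, s ≠ Set.univ → s.Nonempty → ∀ w' : V → ℕ, (∀ v, 0 < w' v) →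
      ∃ P ⊆ s, Perf G P ∧ wCliqueNumOn G w' (s \ P) < wCliqueNumOn G w' s := by
  have hprop : ∀ s, s ≠ Set.univ → s.Nonempty → ∀ w' : V → ℕ, (∀ v, 0 < w' v) →
      ∃ P ⊆ s, Perf G P ∧ wCliqueNumOn G w' (s \ P) < wCliqueNumOn G w' s := by
    intro s hs hne w' hw'
    obtain ⟨P, W, hPW, hdis, hP, hlt⟩ := h.2 s hs (fun x => w' x) (fun x => hw' x) Set.univ
      (have := hne.to_subtype; Set.univ_nonempty)
    refine ⟨Subtype.val '' P, Subtype.coe_image_subset s P, ?_, ?_⟩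
    · have := (perf_range_iff ((Embedding.induce s).comp (Embedding.induce P))).2 hP
      convert this using 1
      ext x
      constructor
      · rintro ⟨y, hy, rfl⟩
        exact ⟨⟨y, hy⟩, rfl⟩
      · rintro ⟨⟨y, hy⟩, rfl⟩
        exact ⟨y, hy, rfl⟩
    · have e1 : s \ Subtype.val '' P = (Embedding.induce (G := G) s) '' W := by
        have hW : W = Pᶜ := by
          ext x
          have h1 : x ∈ P ∪ W := hPW ▸ Set.mem_univ x
          have h2 : x ∉ P ∩ W := by simp [hdis]
          simp only [Set.mem_union, Set.mem_inter_iff, Set.mem_compl_iff] at *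
          tauto
        rw [hW]
        ext x
        constructor
        · rintro ⟨hxs, hx⟩
          exact ⟨⟨x, hxs⟩, fun t => hx ⟨_, t, rfl⟩, rfl⟩
        · rintro ⟨y, hy, rfl⟩
          refine ⟨y.2, ?_⟩
          rintro ⟨y', hy', e⟩
          exact hy (Subtype.ext e ▸ hy')
      have e2 : s = (Embedding.induce (G := G) s) '' Set.univ := by
        rw [Set.image_univ]
        exact Subtype.range_coe.symm
      rw [e1, wCliqueNumOn_image]
      conv_rhs => rw [e2, wCliqueNumOn_image]
      exact hlt
  have h1 := h.1
  unfold PerfectlyWeightDivisible at h1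
  push Not at h1
  obtain ⟨w, hw, s, hs, hbad⟩ := h1
  have hsu : s = Set.univ := by
    by_contra hsu
    obtain ⟨P, hPs, hP, hlt⟩ := hprop s hsu hs w hw
    exact absurd hlt (not_lt.2 (hbad P (s \ P) (Set.union_sdiff_cancel hPs)
      (Set.inter_sdiff_self P s) (perf_iff.2 hP)))
  subst hsu
  exact ⟨w, hw, fun P hP => not_lt.2 (hbad P Pᶜ (Set.union_compl_self P)
    (Set.inter_compl_self P) (perf_iff.2 hP)), hprop⟩

/-- If `M(v)` were perfect, then so would be `M(v) ∪ {v}`, and no clique of the remaining set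
`N(v)` has maximum weight since it can be extended by `v`. -/
lemma MNWD.imperfect_antinbhd (h : MNWD G) (v : V) :
    ¬ Perf G (G.neighborSet v ∪ {v})ᶜ := by
  classical
  intro hM
  obtain ⟨w, hw, hbad, -⟩ := h.exists_weight
  refine hbad (insert v (G.neighborSet v ∪ {v})ᶜ) (hM.insert_simplicial ?_)
    (wCliqueNumOn_lt fun K hK hKc => ?_)
  · rintro x ⟨hx, hvx⟩
    exact absurd (Or.inl hvx) hx
  · have hKv : ∀ x ∈ K, G.Adj v x := by
      intro x hx
      have hx' := hK hx
      by_contra hvx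
      apply hx'
      by_cases hxv : x = v
      · exact Or.inl hxv
      · right
        rintro (t | t)
        · exact hvx t
        · exact hxv t
    have hvK : v ∉ K := fun hv => G.loopless.irrefl v (hKv v hv)
    have := le_wCliqueNumOn (w := w) (Set.subset_univ (↑(insert v K) : Set V)) (by
      rw [Finset.coe_insert, isClique_insert]
      exact ⟨hKc, fun x hx _ => hKv x hx⟩)
    rw [Finset.sum_insert hvK] at this
    have := hw v
    omega

/-- MNWD graphs have no homogeneous set. A homogeneous set `X` is divided first; then it is
contracted to one of the vertices `x` of its perfect part, with weight the maximum weight of a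
clique of `X`, and the contracted graph is divided. If `x` falls in the perfect part, it is
replaced there by the perfect part of `X`; otherwise all of `X` goes to the other part. -/
lemma MNWD.primeOn (h : MNWD G) : PrimeOn G Set.univ := by
  classical
  rintro X ⟨-, hX⟩ hXn
  by_contra hXu
  have hom : ∀ z, z ∉ X → (∀ x ∈ X, G.Adj z x) ∨ (∀ x ∈ X, ¬ G.Adj z x) :=
    fun z => hX z (Set.mem_univ z)
  obtain ⟨w, hw, hbad, hgood⟩ := h.exists_weight
  obtain ⟨PX, hPX, hPXp, hPXlt⟩ := hgood X hXu hXn.nonempty w hw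
  obtain ⟨x, hxP⟩ : PX.Nonempty := by
    rw [Set.nonempty_iff_ne_empty]
    rintro rfl
    simp at hPXlt
  have hxX : x ∈ X := hPX hxP
  have hs : insert x Xᶜ ≠ Set.univ := by
    obtain ⟨y, hy, hyx⟩ := hXn.exists_ne x
    intro e
    rcases (e ▸ Set.mem_univ y : y ∈ insert x Xᶜ) with t | t
    · exact hyx t
    · exact t hy
  set m := wCliqueNumOn G w X with hm
  have hw' : ∀ v, 0 < Function.update w x m v := by
    intro v
    by_cases hv : v = x
    · subst hv
      rw [Function.update_self]
      exact lt_of_le_of_lt (Nat.zero_le _) hPXlt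
    · rw [Function.update_of_ne hv]
      exact hw v
  obtain ⟨P', hP's, hP', hP'lt⟩ := hgood _ hs ⟨x, Set.mem_insert _ _⟩ _ hw'
  have hw'eq : ∀ K : Finset V, x ∉ K → ∑ v ∈ K, Function.update w x m v = ∑ v ∈ K, w v := by
    intro K hK
    refine Finset.sum_congr rfl fun v hv => ?_
    rw [Function.update_of_ne (by rintro rfl; exact hK hv)]
  -- contracting the part of a clique inside `X` to `x`
  have contract : ∀ K : Finset V, G.IsClique (↑K : Set V) → (∃ y ∈ K, y ∈ X) →
      G.IsClique (↑(K.filter (· ∉ X) ∪ {x}) : Set V) ∧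
      ∑ v ∈ K.filter (· ∉ X) ∪ {x}, Function.update w x m v =
        ∑ v ∈ K.filter (· ∉ X), w v + m := by
    intro K hK hKX
    refine ⟨isClique_exchange hK (by simp) (by simpa using hxX) hKX fun z _ => hom z, ?_⟩
    rw [sum_exchange (by simpa using hxX), hw'eq _ (by simp [hxX])]
    simp
  have hinX : ∀ K : Finset V, G.IsClique (↑K : Set V) →
      ∑ v ∈ K.filter (· ∈ X), w v ≤ m := fun K hK =>
    le_wCliqueNumOn (fun y hy => (Finset.mem_filter.1 hy).2)
      (hK.subset (Finset.coe_subset.2 (Finset.filter_subset _ _)))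
  have hsub : ∀ K : Finset V, (↑(K.filter (· ∉ X) ∪ {x}) : Set V) ⊆ insert x Xᶜ := by
    intro K y hy
    rcases Finset.mem_union.1 hy with hy | hy
    · exact Or.inr (Finset.mem_filter.1 hy).2
    · exact Or.inl (Finset.mem_singleton.1 hy)
  -- the contracted graph has no heavier clique, as `x` can be expanded again
  have hle : wCliqueNumOn G (Function.update w x m) (insert x Xᶜ) ≤
      wCliqueNumOn G w Set.univ := by
    obtain ⟨K, hK, hKc, e⟩ := exists_wCliqueNumOn G (Function.update w x m) (insert x Xᶜ)
    rw [← e]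
    by_cases hxK : x ∈ K
    · obtain ⟨L, hL, hLc, eL⟩ := exists_wCliqueNumOn G w X
      have hKX : K.filter (· ∈ X) = {x} := by
        ext y
        rw [Finset.mem_filter, Finset.mem_singleton]
        exact ⟨fun hy => (hK hy.1).resolve_right fun t => t hy.2, by
          rintro rfl
          exact ⟨hxK, hxX⟩⟩
      rw [sum_split X, hKX, hw'eq _ (by simp [hxX]), Finset.sum_singleton, Function.update_self,
        hm, ← eL, ← sum_exchange hL]
      exact le_wCliqueNumOn (Set.subset_univ _)
        (isClique_exchange hKc hLc hL ⟨x, hxK, hxX⟩ fun z _ => hom z)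
    · rw [hw'eq K hxK]
      exact le_wCliqueNumOn (Set.subset_univ _) hKc
  by_cases hxP' : x ∈ P'
  · refine hbad (PX ∪ (P' \ {x})) ?_ (wCliqueNumOn_lt fun K hK hKc => ?_)
    · have hdis : ∀ y ∈ P' \ {x}, y ∉ X := fun y hy => (hP's hy.1).resolve_left hy.2
      refine hPXp.substitute (x := x) ?_ hxP ?_ ?_
      · rwa [Set.insert_sdiff_singleton, Set.insert_eq_of_mem hxP']
      · exact Set.disjoint_left.2 fun y hy hyP => hdis y hyP (hPX hy)
      · intro y hy
        exact (hom y (hdis y hy)).imp (fun t a ha => t a (hPX ha)) (fun t a ha => t a (hPX ha))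
    · have hKPX : ∀ y ∈ K, y ∉ PX := fun y hy t => hK hy (Or.inl t)
      have hxK : x ∉ K := fun t => hKPX x t hxP
      have hKP' : ∀ y ∈ K, y ∉ P' := fun y hy t =>
        hK hy (Or.inr ⟨t, by rintro rfl; exact hxK hy⟩)
      by_cases hKX : ∃ y ∈ K, y ∈ X
      · obtain ⟨hc1, hc2⟩ := contract K hKc hKX
        have h1 := le_wCliqueNumOn (w := Function.update w x m) (hsub K) hc1
        have h2 : ∑ v ∈ K.filter (· ∈ X), w v ≤ wCliqueNumOn G w (X \ PX) :=
          le_wCliqueNumOn (fun y hy => ⟨(Finset.mem_filter.1 hy).2,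
            hKPX y (Finset.mem_filter.1 hy).1⟩)
            (hKc.subset (Finset.coe_subset.2 (Finset.filter_subset _ _)))
        have h3 := sum_split X K w
        omega
      · push Not at hKX
        rw [← hw'eq K hxK]
        exact lt_of_le_of_lt (le_wCliqueNumOn (s := insert x Xᶜ \ P')
          (fun y hy => ⟨Or.inr (hKX y hy), hKP' y hy⟩) hKc) (hP'lt.trans_le hle)
  · refine hbad P' hP' (wCliqueNumOn_lt fun K hK hKc => ?_)
    by_cases hKX : ∃ y ∈ K, y ∈ X
    · obtain ⟨hc1, hc2⟩ := contract K hKc hKX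
      have h1 := le_wCliqueNumOn (w := Function.update w x m) (s := insert x Xᶜ \ P')
        (fun y hy => ⟨hsub K hy, by
          rcases Finset.mem_union.1 hy with hy | hy
          · exact hK (Finset.mem_filter.1 hy).1
          · rwa [Finset.mem_singleton.1 hy]⟩) hc1
      have h2 := hinX K hKc
      have h3 := sum_split X K w
      omega
    · push Not at hKX
      rw [← hw'eq K fun t => hKX x t hxX]
      exact lt_of_le_of_lt (le_wCliqueNumOn (s := insert x Xᶜ \ P')
        (fun y hy => ⟨Or.inr (hKX y hy), hK hy⟩) hKc) (hP'lt.trans_le hle)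

lemma MNWD.not_subset_pair (h : MNWD G) (a b : V) : ¬ (Set.univ : Set V) ⊆ {a, b} :=
  not_subset_pair_of_imperfect
    (fun hp => h.imperfect_antinbhd a (hp.mono (Set.subset_univ _))) a b

lemma MNWD.connected (h : MNWD G) : G.Connected := by
  have hne : Nonempty V := by
    by_contra hV
    rw [not_nonempty_iff] at hV
    refine h.1 fun w _ s hs => ?_
    exact hV.elim hs.some
  refine ⟨fun u v => ?_⟩
  by_contra huv
  obtain ⟨a, ha, b, hb, hab⟩ := h.primeOn.cross h.not_subset_pair
    (A := {x | G.Reachable u x}) (Set.subset_univ _) ⟨u, Reachable.refl u⟩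
    ⟨v, Set.mem_univ v, huv⟩
  exact hb.2 (Reachable.trans ha hab.reachable)

/-- If `N(v)` and `M(v)` contained minimally imperfect graphs `H₁` and `H₂`, then every vertex of
`H₂` would be adjacent to all of `H₁` but a clique, while the neighbours in `H₂` of a vertex
of `H₁` would form a stable set. The neighbourhoods of two non-adjacent vertices of `H₁` thus
cover `H₂` by two stable sets, and `H₂` would be bipartite. -/
lemma MNWD.perf_neighborSet (h : MNWD G) (hb : BullFree G) (v : V) :
    Perf G (G.neighborSet v) := by
  by_contra hN
  obtain ⟨H₁, hH₁v, hH₁, hmin₁⟩ := exists_minimal_imperfect hN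
  obtain ⟨H₂, hH₂v, hH₂, hmin₂⟩ := exists_minimal_imperfect (h.imperfect_antinbhd v)
  have hp₁ := primeOn_of_minimal_imperfect hH₁ hmin₁
  have hp₂ := primeOn_of_minimal_imperfect hH₂ hmin₂
  have hv₁ : ∀ a ∈ H₁, G.Adj v a := fun a ha => hH₁v ha
  have hvH₁ : v ∉ H₁ := fun t => G.loopless.irrefl v (hv₁ v t)
  have hv₂ : ∀ u ∈ H₂, ¬ G.Adj v u := fun u hu t => hH₂v hu (Or.inl t)
  have hvH₂ : v ∉ H₂ := fun t => hH₂v t (Or.inr rfl)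
  have hno₁ := fun y hy hya => hb.no_center_anticenter h.primeOn hp₁
    (not_subset_pair_of_imperfect hH₁) (not_split_of_minimal_imperfect hH₁ hmin₁)
    (y₀ := y) hvH₁ hv₁ hy hya
  have hno₂ := fun x hx hxc => hb.no_center_anticenter h.primeOn hp₂
    (not_subset_pair_of_imperfect hH₂) (not_split_of_minimal_imperfect hH₂ hmin₂)
    (x₀ := x) hx hxc hvH₂ hv₂
  have hdis : ∀ u ∈ H₂, u ∉ H₁ := fun u hu t => hv₂ u hu (hv₁ u t)
  obtain ⟨a, ha, b, hbH, hne, hab⟩ : ∃ a ∈ H₁, ∃ b ∈ H₁, a ≠ b ∧ ¬ G.Adj a b := by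
    have : Nonempty V := ⟨v⟩
    obtain ⟨c, hc, d, hd, hcd⟩ := nontrivial_of_not_subset_pair (not_subset_pair_of_imperfect hH₁)
    obtain ⟨a, ha, b, hb, hab⟩ := hp₁.cross_compl (not_subset_pair_of_imperfect hH₁) (A := {c})
      (by simpa using hc) ⟨c, rfl⟩ ⟨d, hd, fun t => hcd (Eq.symm t)⟩
    obtain rfl : a = c := ha
    exact ⟨a, hc, b, hb.1, fun e => hb.2 e.symm, hab⟩
  have hstable : ∀ c ∈ H₁, ∀ p ∈ {u | u ∈ H₂ ∧ G.Adj c u}, ∀ q ∈ {u | u ∈ H₂ ∧ G.Adj c u},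
      ¬ G.Adj p q := by
    rintro c hc p ⟨hp, hcp⟩ q ⟨hq, hcq⟩
    have hcH₂ : c ∉ H₂ := fun t => hdis c t hc
    refine hb.isIndep_nbrs hp₂ hvH₂ hcH₂ hv₂ (hv₁ c hc).symm ?_ p hp q hq hcp hcq
    by_contra! hall
    exact hno₂ c hcH₂ hall
  refine hH₂ (perf_bipartite (fun u hu => ?_) (hstable a ha) (hstable b hbH))
  have huc := hb.isClique_nonnbrs hp₁ hv₁ (u := u) (fun t => hv₂ u hu t.symm) (by
    by_contra! hall
    exact hno₁ u (hdis u hu) hall)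
  by_contra hcon
  refine hab (huc ⟨ha, fun t => hcon (Or.inl ⟨hu, t.symm⟩)⟩
    ⟨hbH, fun t => hcon (Or.inr ⟨hu, t.symm⟩)⟩ hne)

end MNWD

/-! ### Odd antiholes -/

/-- The vertices `b₀, …, b₄` form a house, the complement of the path `b₀b₁b₂b₃b₄`, and `z` is
anticomplete to it. In a bull-free graph a neighbour of `z` adjacent to `b₂` is
adjacent to `b₃`. (The non-adjacency of `b₀` and `b₁` is not needed.) -/
lemma BullFree.house {V : Type*} {G : SimpleGraph V} (hb : BullFree G) {b₀ b₁ b₂ b₃ b₄ u z : V}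
    (h12 : ¬ G.Adj b₁ b₂) (h23 : ¬ G.Adj b₂ b₃) (h34 : ¬ G.Adj b₃ b₄)
    (h02 : G.Adj b₀ b₂) (h03 : G.Adj b₀ b₃) (h04 : G.Adj b₀ b₄) (h13 : G.Adj b₁ b₃)
    (h14 : G.Adj b₁ b₄) (h24 : G.Adj b₂ b₄) (hz0 : ¬ G.Adj z b₀) (hz1 : ¬ G.Adj z b₁)
    (hz2 : ¬ G.Adj z b₂) (hz3 : ¬ G.Adj z b₃) (hz4 : ¬ G.Adj z b₄) (huz : G.Adj u z)
    (hu2 : G.Adj u b₂) : G.Adj u b₃ := by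
  by_contra hu3
  have hu0 : ¬ G.Adj u b₀ := fun hu0 =>
    hb u b₀ b₂ z b₃ hu0 hu2 h02 huz.symm h03.symm hz0 hz2 (fun t => hu3 t.symm)
      (fun t => h23 t.symm) hz3
  by_cases hu4 : G.Adj u b₄
  · have hu1 : ¬ G.Adj u b₁ := fun hu1 =>
      hb u b₁ b₄ z b₃ hu1 hu4 h14 huz.symm h13.symm hz1 hz4 (fun t => hu3 t.symm) h34 hz3
    exact hb u b₄ b₂ z b₁ hu4 hu2 h24.symm huz.symm h14 hz4 hz2 (fun t => hu1 t.symm) h12 hz1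
  · exact hb b₂ b₀ b₄ u b₃ h02.symm h24 h04 hu2 h03.symm hu0 hu4 (fun t => h23 t.symm) h34 hu3

section Cycle

open Fin.NatCast Fin.CommRing

lemma compl_cycleGraph_adj (n c d : ℕ) (h1 : 2 ≤ d) (h2 : d ≤ 4) :
    (cycleGraph (n + 7))ᶜ.Adj (c : Fin (n + 7)) ((c + d : ℕ) : Fin (n + 7)) := by
  have hd : ((d : Fin (n + 7)) : ℕ) = d := by
    rw [Fin.val_natCast]
    exact Nat.mod_eq_of_lt (by omega)
  have hd0 : (d : Fin (n + 7)) ≠ 0 := fun t => by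
    rw [t] at hd
    simp at hd
    omega
  rw [compl_adj, cycleGraph_adj']
  push_cast
  refine ⟨fun e => hd0 (by simpa using e), ?_⟩
  rw [add_sub_cancel_left, sub_add_cancel_left, hd, Fin.val_neg, if_neg hd0, hd]
  omega

lemma not_compl_cycleGraph_adj (n c : ℕ) :
    ¬ (cycleGraph (n + 7))ᶜ.Adj (c : Fin (n + 7)) ((c + 1 : ℕ) : Fin (n + 7)) := by
  rw [compl_adj, cycleGraph_adj]
  push_cast
  simp

/-- The maximum stable sets of a cycle of length `k` have at most `k / 2` vertices, as a stable
set is disjoint from its shift by `1`. -/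
lemma two_mul_card_le_of_indep (n : ℕ) (s : Finset (Fin (n + 7)))
    (hs : (cycleGraph (n + 7))ᶜ.IsClique (↑s : Set (Fin (n + 7)))) : 2 * s.card ≤ n + 7 := by
  have hdis : Disjoint s (s.image (· + 1)) := by
    rw [Finset.disjoint_left]
    intro x hx hx'
    obtain ⟨y, hy, rfl⟩ := Finset.mem_image.1 hx'
    have := hs hy hx (by simp)
    rw [compl_adj, cycleGraph_adj] at this
    simp at this
  have := Finset.card_le_univ (s ∪ s.image (· + 1))
  rw [Finset.card_union_of_disjoint hdis,
    Finset.card_image_of_injective _ (add_left_injective _), Fintype.card_fin] at this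
  omega

/-- A stable set of an antihole consists of at most two vertices: three pairwise adjacent
vertices of the cycle would give three differences `±1` adding up to `0`. -/
lemma card_le_two_of_indep (n : ℕ) (s : Finset (Fin (n + 7)))
    (hs : ∀ x ∈ s, ∀ y ∈ s, ¬ (cycleGraph (n + 7))ᶜ.Adj x y) : s.card ≤ 2 := by
  by_contra! hcon
  obtain ⟨a, b, c, ha, hb, hc, hab, hac, hbc⟩ := Finset.two_lt_card_iff.1 hcon
  have adj : ∀ x ∈ s, ∀ y ∈ s, x ≠ y → x - y = 1 ∨ y - x = 1 := by
    intro x hx y hy hxy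
    have := hs x hx y hy
    rw [compl_adj, cycleGraph_adj] at this
    tauto
  have h1 := adj a ha b hb hab
  have h2 := adj b hb c hc hbc
  have h3 := adj a ha c hc hac
  have one_ne : (1 : Fin (n + 7)) ≠ 0 := by simp
  have three_ne : (3 : Fin (n + 7)) ≠ 0 := by
    intro t
    have := congrArg Fin.val t
    rw [show (3 : Fin (n + 7)) = ((3 : ℕ) : Fin (n + 7)) by norm_num, Fin.val_natCast,
      Nat.mod_eq_of_lt (by omega)] at this
    simp at this
  rcases h1 with h1 | h1 <;> rcases h2 with h2 | h2 <;> rcases h3 with h3 | h3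
  · exact one_ne (by linear_combination h3 - h1 - h2)
  · exact three_ne (by linear_combination -h1 - h2 - h3)
  · exact one_ne (by linear_combination h1 - h2 - h3)
  · exact one_ne (by linear_combination h2 - h1 - h3)
  · exact one_ne (by linear_combination h2 - h1 - h3)
  · exact one_ne (by linear_combination h1 - h2 - h3)
  · exact three_ne (by linear_combination -h1 - h2 - h3)
  · exact one_ne (by linear_combination h3 - h1 - h2)

/-- With `ω` the clique number and `k` the order of the antihole, `ω` colours cover at most
`2ω ≤ k` vertices, so that `k = 2ω` would be even. -/
lemma not_isPerfect_antihole (n : ℕ) (hn : Odd (n + 7)) : ¬ IsPerfect (cycleGraph (n + 7))ᶜ := by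
  intro h
  obtain ⟨c, hc, hcol⟩ := isPerfect_iff.1 h Set.univ subset_rfl
  obtain ⟨K, -, hK, e⟩ := exists_cliqueNumOn (cycleGraph (n + 7))ᶜ Set.univ
  have h1 := two_mul_card_le_of_indep n K hK
  have h2 := Finset.card_le_mul_card_image_of_maps_to (s := Finset.univ) (f := c)
    (t := Finset.range (cliqueNumOn (cycleGraph (n + 7))ᶜ Set.univ))
    (fun x _ => Finset.mem_range.2 (hc x (Set.mem_univ x))) 2 (fun i _ =>
      card_le_two_of_indep n _ fun x hx y hy hxy => hcol x (Set.mem_univ x) y (Set.mem_univ y) hxy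
        ((Finset.mem_filter.1 hx).2.trans (Finset.mem_filter.1 hy).2.symm))
  rw [Finset.card_univ, Fintype.card_fin, Finset.card_range, ← e] at h2
  obtain ⟨m, hm⟩ := hn
  omega

/-- Let no vertex of a connected bull-free graph be complete to the antihole `g`. If `z` is
anticomplete to `g`, so is every neighbour `u` of `z`: by `BullFree.house`, `u` would otherwise be
adjacent to all vertices of `g` in turn. By connectivity, no vertex sees `g`, not even its own
vertices. -/
lemma BullFree.no_antihole {V : Type*} {G : SimpleGraph V} (hb : BullFree G) (hG : G.Connected)
    (n : ℕ) (g : (cycleGraph (n + 7))ᶜ ↪g G) (hnb : ∀ u, ∃ i, ¬ G.Adj u (g i)) (v : V)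
    (hv : ∀ i, ¬ G.Adj v (g i)) : False := by
  have hA : ∀ c d : ℕ, 2 ≤ d → d ≤ 4 →
      G.Adj (g (c : Fin (n + 7))) (g ((c + d : ℕ) : Fin (n + 7))) := fun c d h1 h2 =>
    g.map_adj_iff.2 (compl_cycleGraph_adj n c d h1 h2)
  have hN : ∀ c : ℕ, ¬ G.Adj (g (c : Fin (n + 7))) (g ((c + 1 : ℕ) : Fin (n + 7))) := fun c t =>
    not_compl_cycleGraph_adj n c (g.map_adj_iff.1 t)
  have step : ∀ z u, (∀ i, ¬ G.Adj z (g i)) → G.Adj z u → ∀ i, ¬ G.Adj u (g i) := by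
    intro z u hz hzu i hi
    obtain ⟨j, hj⟩ := hnb u
    have next : ∀ c : ℕ, G.Adj u (g ((c + 2 : ℕ) : Fin (n + 7))) →
        G.Adj u (g ((c + 3 : ℕ) : Fin (n + 7))) := fun c hc =>
      hb.house (hN (c + 1)) (hN (c + 2)) (hN (c + 3)) (hA c 2 le_rfl (by omega))
        (hA c 3 (by omega) (by omega)) (hA c 4 (by omega) le_rfl) (hA (c + 1) 2 le_rfl (by omega))
        (hA (c + 1) 3 (by omega) (by omega)) (hA (c + 2) 2 le_rfl (by omega))
        (hz _) (hz _) (hz _) (hz _) (hz _) hzu.symm hc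
    have hall : ∀ t : ℕ, G.Adj u (g ((i + (n + 5) + t + 2 : ℕ) : Fin (n + 7))) := by
      intro t
      induction t with
      | zero =>
        have : ((i + (n + 5) + 0 + 2 : ℕ) : Fin (n + 7)) = i := by
          ext
          rw [Fin.val_natCast, show (i : ℕ) + (n + 5) + 0 + 2 = i + (n + 7) by ring,
            Nat.add_mod_right, Nat.mod_eq_of_lt i.2]
        rwa [this]
      | succ t ih => exact next _ ih
    apply hj
    have := hall ((n + 7) + j - i)
    have e : ((i + (n + 5) + ((n + 7) + j - i) + 2 : ℕ) : Fin (n + 7)) = j := by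
      ext
      have := i.2
      rw [Fin.val_natCast, show (i : ℕ) + (n + 5) + ((n + 7) + j - i) + 2 =
        j + (n + 7) + (n + 7) by omega, Nat.add_mod_right, Nat.add_mod_right,
        Nat.mod_eq_of_lt j.2]
    rwa [e] at this
  have hall : ∀ u, G.Reachable v u → ∀ i, ¬ G.Adj u (g i) := by
    rintro u ⟨p⟩
    induction p with
    | nil => exact hv
    | cons hadj p ih => exact ih (step _ _ hv hadj)
  exact hall _ (hG.preconnected v (g ((0 : ℕ) : Fin (n + 7)))) _ (hA 0 2 le_rfl (by omega))

end Cycle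

/-- A bull-free minimally non-perfectly weight divisible graph is connected and locally
perfect, and for every vertex `v`, the subgraph induced on `M(v)` is imperfect and
contains no odd antihole with at least 7 vertices. -/
theorem bullFree_MNWD_structure {V : Type*} [Fintype V] (G : SimpleGraph V)
    (hbull : IsFree G bull) (hmnwd : MNWD G) :
    G.Connected ∧ LocallyPerfect G ∧
    ∀ v : V,
      ¬ IsPerfect (G.induce ((G.neighborSet v ∪ {v})ᶜ)) ∧
      ∀ k : ℕ, 7 ≤ k → Odd k →
        IsFree (G.induce ((G.neighborSet v ∪ {v})ᶜ)) ((SimpleGraph.cycleGraph k)ᶜ) := by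
  have hb := BullFree.of_isFree hbull
  refine ⟨hmnwd.connected, fun v => perf_iff.2 (hmnwd.perf_neighborSet hb v), fun v =>
    ⟨fun hM => hmnwd.imperfect_antinbhd v (perf_iff.1 hM), fun k hk hodd ⟨f, hf⟩ => ?_⟩⟩
  obtain ⟨n, rfl⟩ := Nat.exists_eq_add_of_le' hk
  let g : (cycleGraph (n + 7))ᶜ ↪g G :=
    ⟨f.trans (Function.Embedding.subtype _), fun {a b} => hf a b⟩
  refine hb.no_antihole hmnwd.connected n g (fun u => ?_) v
    fun i hi => (f i).2 (Or.inl hi)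
  by_contra! hall
  refine not_isPerfect_antihole n hodd ((perf_range_iff g).1
    ((hmnwd.perf_neighborSet hb u).mono ?_))
  rintro _ ⟨i, rfl⟩
  exact hall i
end

section
/- Let G be a locally perfect bull-free graph, let C be an odd hole in G (an induced cycle of odd length k ≥ 5), and let uv be an edge of G with u ∈ N(V(C)) and v ∈ M(V(C)). Then N(u) ∩ V(C) is a stable set of G. -/
/-!
Suppose `u` is adjacent to two consecutive vertices `c i`, `c (i + 1)` of the hole. If `u` were not
adjacent to `c (i + 2)`, then the triangle `u, c i, c (i + 1)` with the pendant edges `u v` and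
`c (i + 1) c (i + 2)` would be a bull. So `u` is adjacent to `c (i + 2)`, and going around the hole
`u` is adjacent to all of it. Hence the neighbourhood of `u` contains an odd cycle of length at
least 5, which is triangle-free but not 2-colourable, contradicting local perfection.
-/


open SimpleGraph

lemma sub_val_eq_ite {n : ℕ} (a b : Fin n) :
    (a - b).val = if b.val ≤ a.val then a.val - b.val else n + a.val - b.val := by
  have := a.2
  have := b.2
  split_ifs with h
  · exact Fin.sub_val_of_le h
  · rw [Fin.val_sub, Nat.mod_eq_of_lt] <;> omega

/-- Going around a cycle: a property passed on from each vertex to its successor holds everywhere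
as soon as it holds somewhere. -/
lemma forall_of_succ (n : ℕ) (P : Fin (n + 4) → Prop) (i : Fin (n + 4)) (h0 : P i)
    (hs : ∀ j, P j → P (j + 1)) (j : Fin (n + 4)) : P j := by
  open Fin.CommRing in
  have hall : ∀ m : ℕ, P (i + (m : Fin (n + 4))) := by
    intro m
    induction m with
    | zero => simpa using h0
    | succ m ih =>
      rw [Nat.cast_succ, ← add_assoc]
      exact hs _ ih
  have := hall (j - i).val
  rwa [Fin.cast_val_eq_self, add_sub_cancel] at this

/-- A cycle of length at least 4 has no triangle. -/
lemma cycleGraph_no_triangle (n : ℕ) (x y z : Fin (n + 4))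
    (hxy : (SimpleGraph.cycleGraph (n + 4)).Adj x y)
    (hxz : (SimpleGraph.cycleGraph (n + 4)).Adj x z)
    (hyz : (SimpleGraph.cycleGraph (n + 4)).Adj y z) : False := by
  rw [SimpleGraph.cycleGraph_adj'] at hxy hxz hyz
  simp only [sub_val_eq_ite] at hxy hxz hyz
  have := x.2
  have := y.2
  have := z.2
  split_ifs at * <;> omega

/-- An induced odd cycle of length at least 4 is not contained in a perfect graph: its clique number
is at most 2, but it is not 2-colourable. -/
lemma not_isPerfect_of_oddHole {W : Type*} (H : SimpleGraph W) (n : ℕ) (hodd : Odd (n + 4))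
    (g : Fin (n + 4) → W)
    (hg : ∀ i j, H.Adj (g i) (g j) ↔ (SimpleGraph.cycleGraph (n + 4)).Adj i j) :
    ¬ IsPerfect H := by
  intro hp
  have h := hp (Set.range g)
  have hle : cliqueNumOn H (Set.range g) ≤ 2 := by
    refine csSup_le ⟨0, ∅, by simp, by simp⟩ ?_
    rintro m ⟨t, hts, ht⟩
    by_contra! hm
    rw [← ht.card_eq, Finset.two_lt_card] at hm
    obtain ⟨a, ha, b, hb, c, hc, hab, hac, hbc⟩ := hm
    obtain ⟨x, rfl⟩ := hts ha
    obtain ⟨y, rfl⟩ := hts hb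
    obtain ⟨z, rfl⟩ := hts hc
    exact cycleGraph_no_triangle n x y z ((hg _ _).1 (ht.isClique ha hb hab))
      ((hg _ _).1 (ht.isClique ha hc hac)) ((hg _ _).1 (ht.isClique hb hc hbc))
  have hcol : (H.induce (Set.range g)).Colorable 2 := by
    rw [← SimpleGraph.chromaticNumber_le_iff_colorable, h]
    exact_mod_cast hle
  let φ : SimpleGraph.cycleGraph (n + 4) →g H.induce (Set.range g) :=
    ⟨fun i => ⟨g i, i, rfl⟩, fun {i j} hij => (hg i j).2 hij⟩
  have h2 : (SimpleGraph.cycleGraph (n + 4)).Colorable 2 := hcol.of_hom φ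
  rw [← SimpleGraph.chromaticNumber_le_iff_colorable,
    SimpleGraph.chromaticNumber_cycleGraph_of_odd _ (by omega) hodd] at h2
  exact absurd h2 (by decide)

/-- A triangle `a b c` with pendant vertices `d` at `a` and `e` at `b` is an induced bull. -/
lemma containsInduced_bull {V : Type*} (G : SimpleGraph V) (a b c d e : V)
    (hab : G.Adj a b) (hac : G.Adj a c) (hbc : G.Adj b c) (had : G.Adj a d) (hbe : G.Adj b e)
    (hae : ¬ G.Adj a e) (hbd : ¬ G.Adj b d) (hcd : ¬ G.Adj c d) (hce : ¬ G.Adj c e)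
    (hde : ¬ G.Adj d e) : ContainsInduced G bull := by
  have hadj : ∀ i j, G.Adj (![a, b, c, d, e] i) (![a, b, c, d, e] j) ↔ bull.Adj i j := by
    intro i j
    fin_cases i <;> fin_cases j <;> simp [bull, G.adj_comm, *]
  refine ⟨⟨![a, b, c, d, e], ?_⟩, hadj⟩
  -- Distinct vertices of the bull have distinct neighbourhoods, so `hadj` forces injectivity.
  have hsep : ∀ i j : Fin 5, (∀ l, bull.Adj i l ↔ bull.Adj j l) → i = j := by
    simp only [bull, SimpleGraph.fromEdgeSet_adj, Set.mem_insert_iff, Set.mem_singleton_iff]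
    decide
  intro i j hij
  exact hsep i j fun l => by rw [← hadj, ← hadj, hij]

/-- In a locally perfect bull-free graph, if `C` is an odd hole, `u ∈ N(V(C))`,
`v ∈ M(V(C))` and `uv` is an edge, then `N(u) ∩ V(C)` is a stable set. -/
theorem neighbors_on_oddHole_stable {V : Type*} [Fintype V] (G : SimpleGraph V)
    (hlp : LocallyPerfect G) (hbull : IsFree G bull)
    (k : ℕ) (hk5 : 5 ≤ k) (hkodd : Odd k)
    (f : Fin k ↪ V) (hf : ∀ i j, G.Adj (f i) (f j) ↔ (SimpleGraph.cycleGraph k).Adj i j)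
    (u v : V) (huv : G.Adj u v)
    (hu : u ∈ nbhd G (Set.range f)) (hv : v ∈ antiNbhd G (Set.range f)) :
    (G.neighborSet u ∩ Set.range f).Pairwise (fun a b => ¬ G.Adj a b) := by
  obtain ⟨n, rfl⟩ : ∃ n, k = n + 4 := ⟨k - 4, by omega⟩
  have hvf : ∀ i, ¬ G.Adj v (f i) := fun i => hv.2 _ ⟨i, rfl⟩
  have hsucc : ∀ i, (SimpleGraph.cycleGraph (n + 4)).Adj i (i + 1) := fun i => by
    rw [SimpleGraph.cycleGraph_adj]; right; simp
  have hstep : ∀ i, G.Adj u (f i) → G.Adj u (f (i + 1)) → G.Adj u (f (i + 1 + 1)) := by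
    intro i h0 h1
    by_contra h2
    refine hbull (containsInduced_bull G u (f (i + 1)) (f i) v (f (i + 1 + 1)) h1 h0
      ((hf _ _).2 (hsucc i).symm) huv ((hf _ _).2 (hsucc _)) h2 (fun h => hvf _ h.symm)
      (fun h => hvf _ h.symm) (fun h => ?_) (hvf _))
    exact cycleGraph_no_triangle n _ _ _ (hsucc i) ((hf _ _).1 h) (hsucc _)
  have hcons : ∀ i, G.Adj u (f i) → ¬ G.Adj u (f (i + 1)) := by
    intro i h0 h1
    have hadj := forall_of_succ n (fun j => G.Adj u (f j) ∧ G.Adj u (f (j + 1))) i ⟨h0, h1⟩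
      fun j hj => ⟨hj.2, hstep j hj.1 hj.2⟩
    exact not_isPerfect_of_oddHole (G.induce (G.neighborSet u)) n hkodd
      (fun j => ⟨f j, (hadj j).1⟩) (fun i j => hf i j) (hlp u)
  rintro _ ⟨ha, i, rfl⟩ _ ⟨hb, j, rfl⟩ - hij
  rw [hf, SimpleGraph.cycleGraph_adj] at hij
  rcases hij with h | h
  · obtain rfl : i = j + 1 := by rw [← h]; simp
    exact hcons j hb ha
  · obtain rfl : j = i + 1 := by rw [← h]; simp
    exact hcons i ha hb
end

section
/- Let G be a locally perfect bull-free graph, let C be an odd hole in G (an induced cycle of odd length k ≥ 5), and let x, y, z be vertices of G such that x is adjacent to y, both x and y lie in N(z) ∩ N(V(C)), and z ∈ M(V(C)). If both x and y have at least two neighbors in V(C), then N(x) ∩ V(C) = N(y) ∩ V(C). -/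
/-!
Write `A` and `B` for the neighbourhoods of `x` and `y` on the odd hole `C`.

* `A` and `B` are stable (`not_adj_consecutive`). If `x` sees consecutive vertices `c`, `c'` of `C`,
  then the triangle `x c c'` with `z` pendant at `x` and the successor of `c'` pendant at `c'` is a
  bull unless `x` sees that successor too. Going round, `x` is complete to `C`, so that `N(x)`
  contains an odd hole, which is triangle-free but not bipartite; this contradicts local perfection
  (`exists_not_adj`).
* If some `c` lies in `A ∩ B` and some `a` lies in `A \ B`, then for each neighbour `c'` of `c` on
  `C`, the triangle `x c y` with pendants `a` at `x` and `c'` at `c` is a bull unless `a` is adjacent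
  to `c'`. Hence `a` and `c` have two common neighbours on `C`, impossible in a cycle of length at
  least five (`no_square`). So if `A ∩ B` is nonempty then `A ⊆ B`, and by symmetry `A = B`
  (`subset_of_common`).
* If `A ∩ B` is empty, then the triangle `x y z` with pendants in `A` and `B` shows that `A` is
  complete to `B`; as both have two elements, `C` would contain a four-cycle.
-/

open SimpleGraph

theorem bull_false {V : Type*} {G : SimpleGraph V} (hbull : IsFree G bull) {a b c d e : V}
    (ab : G.Adj a b) (ac : G.Adj a c) (bc : G.Adj b c) (ad : G.Adj a d) (be : G.Adj b e)
    (ae : ¬ G.Adj a e) (bd : ¬ G.Adj b d) (cd : ¬ G.Adj c d) (ce : ¬ G.Adj c e)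
    (de : ¬ G.Adj d e) : False := by
  have h1 := ab.ne
  have h2 := ac.ne
  have h3 := bc.ne
  have h4 := ad.ne
  have h5 := be.ne
  have h6 : a ≠ e := by rintro rfl; exact ce ac.symm
  have h7 : b ≠ d := by rintro rfl; exact cd bc.symm
  have h8 : c ≠ d := by rintro rfl; exact bd bc
  have h9 : c ≠ e := by rintro rfl; exact ae ac
  have h10 : d ≠ e := by rintro rfl; exact ae ad
  apply hbull
  refine ⟨⟨![a, b, c, d, e], ?_⟩, ?_⟩
  · intro i j hij
    fin_cases i <;> fin_cases j <;> simp_all [eq_comm]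
  · intro i j
    have hs := fun u v => G.adj_comm u v
    fin_cases i <;> fin_cases j <;> simp [bull] <;> first | assumption | (rw [hs]; assumption)

theorem cycleGraph_adj_iff {n : ℕ} (u v : Fin (n + 5)) :
    (cycleGraph (n + 5)).Adj u v ↔ v = u + 1 ∨ u = v + 1 := by
  rw [cycleGraph_adj]
  constructor
  · rintro (h | h)
    · right; rw [← h]; abel
    · left; rw [← h]; abel
  · rintro (h | h)
    · right; rw [h]; abel
    · left; rw [h]; abel

theorem fin_small_ne {n : ℕ} : (1 : Fin (n + 5)) ≠ 0 ∧ (1 + 1 : Fin (n + 5)) ≠ 0 ∧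
    (1 + 1 + 1 : Fin (n + 5)) ≠ 0 ∧ (1 + 1 + 1 + 1 : Fin (n + 5)) ≠ 0 := by
  have h1 : ((1 : Fin (n + 5)) : ℕ) = 1 := Fin.val_one (n + 3)
  have h2 : ((1 + 1 : Fin (n + 5)) : ℕ) = 2 := by
    rw [Fin.val_add, h1]; exact Nat.mod_eq_of_lt (by omega)
  have h3 : ((1 + 1 + 1 : Fin (n + 5)) : ℕ) = 3 := by
    rw [Fin.val_add, h2, h1]; exact Nat.mod_eq_of_lt (by omega)
  have h4 : ((1 + 1 + 1 + 1 : Fin (n + 5)) : ℕ) = 4 := by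
    rw [Fin.val_add, h3, h1]; exact Nat.mod_eq_of_lt (by omega)
  refine ⟨fun h => ?_, fun h => ?_, fun h => ?_, fun h => ?_⟩
  · rw [h] at h1; simp at h1
  · rw [h] at h2; simp at h2
  · rw [h] at h3; simp at h3
  · rw [h] at h4; simp at h4

theorem no_square_aux {R : Type*} [CommRing R]
    (n4 : (1 + 1 + 1 + 1 : R) ≠ 0) {a a' b b' : R} (ha : a ≠ a') (hb : b ≠ b')
    (h1 : b = a + 1 ∨ a = b + 1) (h2 : b' = a + 1 ∨ a = b' + 1)
    (h3 : b = a' + 1 ∨ a' = b + 1) (h4 : b' = a' + 1 ∨ a' = b' + 1) : False := by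
  rcases h1 with rfl | rfl <;> rcases h2 with h2 | h2 <;> rcases h3 with h3 | h3 <;>
    rcases h4 with h4 | h4 <;> grind

theorem no_triangle_aux {R : Type*} [CommRing R] (n1 : (1 : R) ≠ 0)
    (n3 : (1 + 1 + 1 : R) ≠ 0) {a b c : R} (h1 : b = a + 1 ∨ a = b + 1)
    (h2 : c = a + 1 ∨ a = c + 1) (h3 : c = b + 1 ∨ b = c + 1) : False := by
  rcases h1 with h1 | h1 <;> rcases h2 with h2 | h2 <;> rcases h3 with h3 | h3 <;>
    first
    | exact n1 (by linear_combination h1 - h2 + h3)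
    | exact n1 (by linear_combination h2 - h1 - h3)
    | exact n1 (by linear_combination h1 + h2 - h3)
    | exact n1 (by linear_combination h1 + h2 + h3)
    | exact n1 (by linear_combination h3 - h1 - h2)
    | exact n1 (by linear_combination h2 + h3 - h1)
    | exact n1 (by linear_combination h1 - h2 - h3)
    | exact n1 (by linear_combination h2 - h1 + h3)
    | exact n3 (by linear_combination h1 + h2 + h3)
    | exact n3 (by linear_combination - h1 - h2 - h3)

open scoped Fin.CommRing in
/-- A cycle of length at least five has no four-cycle as a subgraph: unless two vertices coincide,
going round the square gives `4 = 0` in `Fin (n + 5)`. -/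
theorem no_square {n : ℕ} {a a' b b' : Fin (n + 5)} (ha : a ≠ a') (hb : b ≠ b')
    (h1 : (cycleGraph (n + 5)).Adj a b) (h2 : (cycleGraph (n + 5)).Adj a b')
    (h3 : (cycleGraph (n + 5)).Adj a' b) (h4 : (cycleGraph (n + 5)).Adj a' b') : False := by
  rw [cycleGraph_adj_iff] at h1 h2 h3 h4
  exact no_square_aux fin_small_ne.2.2.2 ha hb h1 h2 h3 h4

open scoped Fin.CommRing in
theorem no_triangle {n : ℕ} {a b c : Fin (n + 5)} (h1 : (cycleGraph (n + 5)).Adj a b)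
    (h2 : (cycleGraph (n + 5)).Adj a c) (h3 : (cycleGraph (n + 5)).Adj b c) : False := by
  rw [cycleGraph_adj_iff] at h1 h2 h3
  exact no_triangle_aux fin_small_ne.1 fin_small_ne.2.2.1 h1 h2 h3

section Hole

variable {V : Type*} {G : SimpleGraph V} {n : ℕ} {f : Fin (n + 5) ↪ V}

/-- No vertex of a locally perfect graph is complete to an odd hole. -/
theorem exists_not_adj (hlp : LocallyPerfect G) (hodd : Odd (n + 5))
    (hf : ∀ i j, G.Adj (f i) (f j) ↔ (cycleGraph (n + 5)).Adj i j) (x : V) :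
    ∃ i, ¬ G.Adj x (f i) := by
  by_contra! hall
  let s : Set (G.neighborSet x) := {v | v.1 ∈ Set.range f}
  have hp := hlp x s
  have hcl : cliqueNumOn (G.induce (G.neighborSet x)) s ≤ 2 := by
    refine csSup_le' ?_
    rintro m ⟨t, hts, ht⟩
    by_contra! hm
    obtain ⟨a, b, c, ha, hb, hc, hab, hac, hbc⟩ := Finset.two_lt_card_iff.1 (ht.card_eq ▸ hm)
    obtain ⟨i, hi⟩ := hts ha
    obtain ⟨j, hj⟩ := hts hb
    obtain ⟨l, hl⟩ := hts hc
    have e1 : G.Adj a b := ht.isClique ha hb hab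
    have e2 : G.Adj a c := ht.isClique ha hc hac
    have e3 : G.Adj b c := ht.isClique hb hc hbc
    rw [← hi, ← hj, hf] at e1
    rw [← hi, ← hl, hf] at e2
    rw [← hj, ← hl, hf] at e3
    exact no_triangle e1 e2 e3
  have hcol : ((G.induce (G.neighborSet x)).induce s).Colorable 2 := by
    rw [← chromaticNumber_le_iff_colorable, hp]
    exact_mod_cast hcl
  let g : cycleGraph (n + 5) →g (G.induce (G.neighborSet x)).induce s :=
    ⟨fun i => ⟨⟨f i, hall i⟩, ⟨i, rfl⟩⟩, fun {i j} h => (hf i j).2 h⟩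
  have h2 : (cycleGraph (n + 5)).Colorable 2 := hcol.of_hom g
  have h3 := chromaticNumber_cycleGraph_of_odd (n + 5) (by omega) hodd
  rw [← chromaticNumber_le_iff_colorable, h3] at h2
  exact absurd h2 (by decide)

open scoped Fin.CommRing in
/-- A neighbour of a vertex anticomplete to an odd hole has a stable neighbourhood on that hole. -/
theorem not_adj_consecutive (hlp : LocallyPerfect G) (hbull : IsFree G bull) (hodd : Odd (n + 5))
    (hf : ∀ i j, G.Adj (f i) (f j) ↔ (cycleGraph (n + 5)).Adj i j) {x z : V} (hzx : G.Adj z x)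
    (hz : ∀ i, ¬ G.Adj z (f i)) {i j : Fin (n + 5)} (hi : G.Adj x (f i)) (hj : G.Adj x (f j)) :
    ¬ G.Adj (f i) (f j) := by
  obtain ⟨n1, n2, n3, n4⟩ := @fin_small_ne n
  have key : ∀ u : Fin (n + 5), G.Adj x (f u) → G.Adj x (f (u + 1)) → False := by
    intro u h0 h1
    have hstep : ∀ v : Fin (n + 5), G.Adj x (f v) → G.Adj x (f (v + 1)) →
        G.Adj x (f (v + 1 + 1)) := by
      intro v h0 h1
      by_contra h2
      refine bull_false hbull (a := x) (b := f (v + 1)) (c := f v) (d := z) (e := f (v + 1 + 1))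
        h1 h0 ?_ hzx.symm ?_ h2 (fun h => hz _ h.symm) (fun h => hz _ h.symm) ?_ (hz _)
      · rw [hf, cycleGraph_adj_iff]; exact Or.inr rfl
      · rw [hf, cycleGraph_adj_iff]; exact Or.inl rfl
      · rw [hf, cycleGraph_adj_iff]; grind
    have hround : ∀ m : ℕ, G.Adj x (f (u + (m : Fin (n + 5)))) ∧
        G.Adj x (f (u + (m : Fin (n + 5)) + 1)) := by
      intro m
      induction m with
      | zero => simpa using ⟨h0, h1⟩
      | succ m ih =>
        have := hstep _ ih.1 ih.2
        rw [Nat.cast_succ, ← add_assoc]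
        exact ⟨ih.2, this⟩
    obtain ⟨w, hw⟩ := exists_not_adj hlp hodd hf x
    apply hw
    have := (hround (w - u : Fin (n + 5)).val).1
    rw [Fin.cast_val_eq_self] at this
    simpa using this
  rw [hf, cycleGraph_adj_iff]
  rintro (rfl | rfl)
  · exact key _ hi hj
  · exact key _ hj hi

theorem subset_of_common (hlp : LocallyPerfect G) (hbull : IsFree G bull) (hodd : Odd (n + 5))
    (hf : ∀ i j, G.Adj (f i) (f j) ↔ (cycleGraph (n + 5)).Adj i j) {x y z : V}
    (hxy : G.Adj x y) (hzx : G.Adj z x) (hzy : G.Adj z y) (hz : ∀ i, ¬ G.Adj z (f i))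
    {c : Fin (n + 5)} (hxc : G.Adj x (f c)) (hyc : G.Adj y (f c)) {a : Fin (n + 5)}
    (hxa : G.Adj x (f a)) : G.Adj y (f a) := by
  by_contra hya
  have hac : a ≠ c := by rintro rfl; exact hya hyc
  have key : ∀ c', (cycleGraph (n + 5)).Adj c c' → (cycleGraph (n + 5)).Adj a c' := by
    intro c' hcc'
    rw [← hf] at hcc' ⊢
    by_contra hac'
    exact bull_false hbull (a := x) (b := f c) (c := y) (d := f a) (e := f c')
      hxc hxy hyc.symm hxa hcc'
      (fun h => not_adj_consecutive hlp hbull hodd hf hzx hz hxc h hcc')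
      (not_adj_consecutive hlp hbull hodd hf hzx hz hxc hxa) hya
      (fun h => not_adj_consecutive hlp hbull hodd hf hzy hz hyc h hcc') hac'
  have hr : (cycleGraph (n + 5)).Adj c (c + 1) := (cycleGraph_adj_iff _ _).2 (Or.inl rfl)
  have hl : (cycleGraph (n + 5)).Adj c (c - 1) := (cycleGraph_adj_iff _ _).2 (Or.inr (by simp))
  obtain ⟨n1, n2, n3, n4⟩ := @fin_small_ne n
  have hne : c + 1 ≠ c - 1 := by
    intro h
    rw [eq_sub_iff_add_eq, add_assoc, add_eq_left] at h
    exact n2 h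
  exact no_square hac hne (key _ hr) (key _ hl) hr hl

end Hole

/-- In a locally perfect bull-free graph, let `C` be an odd hole, `x ~ y` with
`x, y ∈ N(z) ∩ N(V(C))` and `z ∈ M(V(C))`. If both `x` and `y` have at least two
neighbors on `C`, then `N(x) ∩ V(C) = N(y) ∩ V(C)`. -/
theorem equal_neighborhoods_on_oddHole {V : Type*} [Fintype V] (G : SimpleGraph V)
    (hlp : LocallyPerfect G) (hbull : IsFree G bull)
    (k : ℕ) (hk5 : 5 ≤ k) (hkodd : Odd k)
    (f : Fin k ↪ V) (hf : ∀ i j, G.Adj (f i) (f j) ↔ (SimpleGraph.cycleGraph k).Adj i j)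
    (x y z : V) (hxy : G.Adj x y)
    (hx : x ∈ G.neighborSet z ∩ nbhd G (Set.range f))
    (hy : y ∈ G.neighborSet z ∩ nbhd G (Set.range f))
    (hz : z ∈ antiNbhd G (Set.range f))
    (hx2 : (G.neighborSet x ∩ Set.range f).Nontrivial)
    (hy2 : (G.neighborSet y ∩ Set.range f).Nontrivial) :
    G.neighborSet x ∩ Set.range f = G.neighborSet y ∩ Set.range f := by
  obtain ⟨n, rfl⟩ : ∃ n, k = n + 5 := ⟨k - 5, by omega⟩
  have hzx : G.Adj z x := hx.1
  have hzy : G.Adj z y := hy.1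
  have hz' : ∀ i, ¬ G.Adj z (f i) := fun i => hz.2 _ ⟨i, rfl⟩
  by_cases hc : ∃ c, G.Adj x (f c) ∧ G.Adj y (f c)
  · obtain ⟨c, hxc, hyc⟩ := hc
    ext v
    constructor
    · rintro ⟨hv, a, rfl⟩
      exact ⟨subset_of_common hlp hbull hkodd hf hxy hzx hzy hz' hxc hyc hv, a, rfl⟩
    · rintro ⟨hv, a, rfl⟩
      exact ⟨subset_of_common hlp hbull hkodd hf hxy.symm hzy hzx hz' hyc hxc hv, a, rfl⟩
  · exfalso
    push Not at hc
    have key : ∀ a b, G.Adj x (f a) → G.Adj y (f b) → (cycleGraph (n + 5)).Adj a b := by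
      intro a b ha hb
      rw [← hf]
      by_contra hab
      exact bull_false hbull hxy hzx.symm hzy.symm ha hb (fun h => hc b h hb) (hc a ha)
        (hz' a) (hz' b) hab
    obtain ⟨_, ⟨ha, a, rfl⟩, _, ⟨ha', a', rfl⟩, haa'⟩ := hx2
    obtain ⟨_, ⟨hb, b, rfl⟩, _, ⟨hb', b', rfl⟩, hbb'⟩ := hy2
    exact no_square (fun h => haa' (congrArg f h)) (fun h => hbb' (congrArg f h))
      (key a b ha hb) (key a b' ha hb') (key a' b ha' hb) (key a' b' ha' hb')
end
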